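/- For any causal curve γ: [a,b] → I×X, L_τ(γ) = τ(γ), where L_τ(γ) = inf{Σ_{i=1}^N τ(γ_{t_{i−1}}, γ_{t_i}) : a = t_0 < ⋯ < t_N = b} is the variational Lorentzian length associated to the time separation function τ. -/

import Mathlib

open Filter MeasureTheory Set Topology
open scoped ENNReal NNReal

noncomputable section

/-- The metric speed of a curve `β` at time `t` w.r.t. a distance function `dist`. -/
def mSpeed {X : Type*} (dst : X → X → ℝ) (β : ℝ → X) (t : ℝ) : ℝ :=
  Filter.limsup (fun e : ℝ => dst (β (t + e)) (β t) / |e|) (nhdsWithin (0 : ℝ) {0}ᶜ)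

/-- The generalized metric speed `v_β(s,t)` of a curve `β` w.r.t. the family of
metrics `d`. -/
def genSpeed {X : Type*} (d : ℝ → X → X → ℝ) (β : ℝ → X) (s t : ℝ) : ℝ :=
  Filter.limsup (fun e : ℝ => (∫ u in t..(t + e), mSpeed (d s) β u) / e)
    (nhdsWithin (0 : ℝ) {0}ᶜ)

/-- Absolute continuity of a curve on `[a,b]` w.r.t. a distance function. -/
def ACOn {X : Type*} (dst : X → X → ℝ) (β : ℝ → X) (a b : ℝ) : Prop :=
  ∃ g : ℝ → ℝ, MeasureTheory.IntegrableOn g (Set.Icc a b) ∧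
    ∀ ⦃t u : ℝ⦄, t ∈ Set.Icc a b → u ∈ Set.Icc a b → t ≤ u →
      dst (β t) (β u) ≤ ∫ r in t..u, g r

/-- The standard distance on `ℝ`. -/
def rdist : ℝ → ℝ → ℝ := fun x y => |x - y|

/-- `d` is a family of metrics on `X` indexed by `s ∈ I`, each generating the
topology of `X`. -/
def IsMetricFamily {X : Type*} [TopologicalSpace X] (I : Set ℝ) (d : ℝ → X → X → ℝ) : Prop :=
  ∀ s ∈ I,
    (∀ x : X, d s x x = 0) ∧ (∀ x y : X, x ≠ y → 0 < d s x y) ∧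
    (∀ x y : X, d s x y = d s y x) ∧ (∀ x y z : X, d s x z ≤ d s x y + d s y z) ∧
    (∀ x : X, (nhds x).HasBasis (fun ε : ℝ => 0 < ε) (fun ε => {y | d s x y < ε}))

/-- Condition (C): local uniform continuity of `s ↦ d_s` in a logarithmic sense. -/
def CondC {X : Type*} [TopologicalSpace X] (I : Set ℝ) (d : ℝ → X → X → ℝ) : Prop :=
  ∀ J : Set ℝ, ∀ K : Set X, J ⊆ I → IsCompact J → IsCompact K →
    ∃ r > (0 : ℝ), ∃ ω : ℝ → ℝ, ω 0 = 0 ∧ Monotone ω ∧ ContinuousAt ω 0 ∧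
      ∀ s ∈ J, ∀ s' ∈ J, ∀ x ∈ K, ∀ y ∈ K, x ≠ y →
        sInf ((fun u => d u x y) '' J) < r →
        |Real.log (d s x y / d s' x y)| ≤ ω |s - s'|

/-- Condition (L): local log-Lipschitz dependence of `d_s` on `s`. -/
def CondL {X : Type*} [TopologicalSpace X] (I : Set ℝ) (d : ℝ → X → X → ℝ) : Prop :=
  ∀ J : Set ℝ, ∀ K : Set X, J ⊆ I → IsCompact J → IsCompact K →
    ∃ C > (0 : ℝ), ∃ r > (0 : ℝ),
      ∀ s ∈ J, ∀ s' ∈ J, ∀ x ∈ K, ∀ y ∈ K, x ≠ y →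
        sInf ((fun u => d u x y) '' J) < r →
        |Real.log (d s x y / d s' x y)| ≤ C * |s - s'|

/-- Condition (H): Lipschitz continuity of `h` in the time variable, locally
uniformly. -/
def CondH {X : Type*} [TopologicalSpace X] (I : Set ℝ) (h : ℝ → X → ℝ) : Prop :=
  ∀ J : Set ℝ, ∀ K : Set X, J ⊆ I → IsCompact J → IsCompact K →
    ∃ C' > (0 : ℝ), ∀ s ∈ J, ∀ s' ∈ J, ∀ x ∈ K, |h s x - h s' x| ≤ C' * |s - s'|

/-- A curve `(α, β) : [a,b] → I × X` with both components absolutely continuous. -/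
def CurveIn {X : Type*} (I : Set ℝ) (d : ℝ → X → X → ℝ) (α : ℝ → ℝ) (β : ℝ → X)
    (a b : ℝ) : Prop :=
  a < b ∧ ACOn rdist α a b ∧ (∀ s ∈ I, ACOn (d s) β a b) ∧ ∀ t ∈ Set.Icc a b, α t ∈ I

/-- Future directed: `α' > 0` a.e. -/
def FutureDirected (α : ℝ → ℝ) (a b : ℝ) : Prop :=
  ∀ᵐ t : ℝ, t ∈ Set.Ioo a b → 0 < deriv α t

/-- Past directed: `α' < 0` a.e. -/
def PastDirected (α : ℝ → ℝ) (a b : ℝ) : Prop :=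
  ∀ᵐ t : ℝ, t ∈ Set.Ioo a b → deriv α t < 0

/-- The causality inequality `v_β(α_t,t)² ≤ h(γ_t)² α'(t)²` a.e. -/
def CausalIneq {X : Type*} (d : ℝ → X → X → ℝ) (h : ℝ → X → ℝ) (α : ℝ → ℝ)
    (β : ℝ → X) (a b : ℝ) : Prop :=
  ∀ᵐ t : ℝ, t ∈ Set.Ioo a b →
    (genSpeed d β (α t) t) ^ 2 ≤ (h (α t) (β t)) ^ 2 * (deriv α t) ^ 2

/-- The timelike inequality `v_β(α_t,t)² < h(γ_t)² α'(t)²` a.e. -/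
def TimelikeIneq {X : Type*} (d : ℝ → X → X → ℝ) (h : ℝ → X → ℝ) (α : ℝ → ℝ)
    (β : ℝ → X) (a b : ℝ) : Prop :=
  ∀ᵐ t : ℝ, t ∈ Set.Ioo a b →
    (genSpeed d β (α t) t) ^ 2 < (h (α t) (β t)) ^ 2 * (deriv α t) ^ 2

/-- Future directed causal curve. -/
def FutureCausal {X : Type*} (I : Set ℝ) (d : ℝ → X → X → ℝ) (h : ℝ → X → ℝ)
    (α : ℝ → ℝ) (β : ℝ → X) (a b : ℝ) : Prop :=
  CurveIn I d α β a b ∧ FutureDirected α a b ∧ CausalIneq d h α β a b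

/-- Future directed timelike curve. -/
def FutureTimelike {X : Type*} (I : Set ℝ) (d : ℝ → X → X → ℝ) (h : ℝ → X → ℝ)
    (α : ℝ → ℝ) (β : ℝ → X) (a b : ℝ) : Prop :=
  CurveIn I d α β a b ∧ FutureDirected α a b ∧ TimelikeIneq d h α β a b

/-- Causal curve (future or past directed). -/
def CausalCurve {X : Type*} (I : Set ℝ) (d : ℝ → X → X → ℝ) (h : ℝ → X → ℝ)
    (α : ℝ → ℝ) (β : ℝ → X) (a b : ℝ) : Prop :=
  CurveIn I d α β a b ∧ (FutureDirected α a b ∨ PastDirected α a b) ∧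
    CausalIneq d h α β a b

/-- The causal relation `p ≤ q` in the generalized Lorentzian product. -/
def causalRel {X : Type*} (I : Set ℝ) (d : ℝ → X → X → ℝ) (h : ℝ → X → ℝ)
    (p q : ℝ × X) : Prop :=
  ∃ a b α β, FutureCausal I d h α β a b ∧
    α a = p.1 ∧ β a = p.2 ∧ α b = q.1 ∧ β b = q.2

/-- The chronological relation `p ≪ q` in the generalized Lorentzian product. -/
def chronRel {X : Type*} (I : Set ℝ) (d : ℝ → X → X → ℝ) (h : ℝ → X → ℝ)
    (p q : ℝ × X) : Prop :=
  ∃ a b α β, FutureTimelike I d h α β a b ∧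
    α a = p.1 ∧ β a = p.2 ∧ α b = q.1 ∧ β b = q.2

/-- The Lorentzian length of a curve. -/
def lorLen {X : Type*} (d : ℝ → X → X → ℝ) (h : ℝ → X → ℝ) (α : ℝ → ℝ) (β : ℝ → X)
    (a b : ℝ) : ℝ :=
  ∫ t in a..b,
    Real.sqrt ((h (α t) (β t)) ^ 2 * (deriv α t) ^ 2 - (genSpeed d β (α t) t) ^ 2)

/-- The time separation function `τ` of the generalized Lorentzian product. -/
def timeSep {X : Type*} (I : Set ℝ) (d : ℝ → X → X → ℝ) (h : ℝ → X → ℝ)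
    (p q : ℝ × X) : ℝ≥0∞ :=
  sSup {l | ∃ a b α β, FutureCausal I d h α β a b ∧
    α a = p.1 ∧ β a = p.2 ∧ α b = q.1 ∧ β b = q.2 ∧
    l = ENNReal.ofReal (lorLen d h α β a b)}

end

noncomputable section

open Filter MeasureTheory Set Topology
open scoped ENNReal

/-- The variational Lorentzian length `L_τ(γ)`: the infimum over partitions
`a = t₀ < ⋯ < t_N = b` of `Σ τ(γ(t_{i-1}), γ(t_i))`. -/
def varLength {X : Type*} (I : Set ℝ) (d : ℝ → X → X → ℝ) (h : ℝ → X → ℝ)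
    (α : ℝ → ℝ) (β : ℝ → X) (a b : ℝ) : ℝ≥0∞ :=
  sInf {l : ℝ≥0∞ | ∃ N : ℕ, 0 < N ∧ ∃ t : ℕ → ℝ, t 0 = a ∧ t N = b ∧
    (∀ i < N, t i < t (i + 1)) ∧
    l = ∑ i ∈ Finset.range N,
      timeSep I d h (α (t i), β (t i)) (α (t (i + 1)), β (t (i + 1)))}

/-!
`τ(γ) ≤ L_τ(γ)`: the Lorentzian length is additive, and every piece of `γ` between consecutive
partition points competes in the time separation of these points.

`L_τ(γ) ≤ τ(γ)`: put `Φ t = L_τ(γ|[a,t])`. Concatenating partitions gives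
`Φ u ≤ Φ t + τ(γ_t, γ_u)` for `t < u`, so it suffices to bound the time separation of nearby points
of `γ`. A causal curve between nearby points cannot leave a small neighbourhood, in which `h` is at
most `H` and, by condition (C), the metrics `d_s` differ by a factor of at most `C`; Minkowski's
inequality then gives `τ(γ_t, γ_u) ≤ √((H (α u - α t))² - (d (β t) (β u) / C)²)`. Without the second
term, this shows that `H α - Φ` is monotone on `[a,b]` once `H` is greater than `h` along `γ`. With
`H` close to `h(γ_t)` and `C` close to `1`, it shows that `Φ'` is at most the Lorentzian speed at
almost every `t`. As the integral of the derivative of a monotone function is at most its increment,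
`Φ b` is at most the integral of the Lorentzian speed.
-/

/-- The filter of nondegenerate intervals `[p.1, p.2]` containing `t` and shrinking to `t`, along
which difference quotients and averages converge to derivatives and densities at `t`. -/
def straddle (t : ℝ) : Filter (ℝ × ℝ) :=
  (𝓝[≤] t ×ˢ 𝓝[≥] t) ⊓ 𝓟 {p | p.1 < p.2}

theorem tendsto_straddle_iff {ι : Type*} {l : Filter ι} {p : ι → ℝ × ℝ} {t : ℝ} :
    Tendsto p l (straddle t) ↔
      Tendsto (fun i => (p i).1) l (𝓝 t) ∧ Tendsto (fun i => (p i).2) l (𝓝 t) ∧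
        ∀ᶠ i in l, (p i).1 ≤ t ∧ t ≤ (p i).2 ∧ (p i).1 < (p i).2 := by
  simp only [straddle, tendsto_inf, tendsto_principal, tendsto_prod_iff', nhdsWithin, mem_Iic,
    mem_Ici, eventually_and, mem_ofPred_eq]
  tauto

theorem tendsto_fst_straddle (t : ℝ) : Tendsto Prod.fst (straddle t) (𝓝 t) :=
  (tendsto_straddle_iff.1 tendsto_id).1

theorem tendsto_snd_straddle (t : ℝ) : Tendsto Prod.snd (straddle t) (𝓝 t) :=
  (tendsto_straddle_iff.1 tendsto_id).2.1

theorem eventually_straddle (t : ℝ) : ∀ᶠ p in straddle t, p.1 ≤ t ∧ t ≤ p.2 ∧ p.1 < p.2 :=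
  (tendsto_straddle_iff.1 tendsto_id).2.2

theorem eventually_straddle_Icc {a b t : ℝ} (ht : t ∈ Ioo a b) :
    ∀ᶠ p in straddle t, a ≤ p.1 ∧ p.1 < p.2 ∧ p.2 ≤ b := by
  filter_upwards [(tendsto_fst_straddle t).eventually (le_mem_nhds ht.1),
    (tendsto_snd_straddle t).eventually (ge_mem_nhds ht.2), eventually_straddle t]
    with p ha hb hp using ⟨ha, hp.2.2, hb⟩

theorem tendsto_min_max_straddle (t : ℝ) :
    Tendsto (fun e : ℝ => (min t (t + e), max t (t + e))) (𝓝[≠] 0) (straddle t) := by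
  have hadd : Tendsto (fun e : ℝ => t + e) (𝓝[≠] 0) (𝓝 t) :=
    ((continuous_const_add t).tendsto' 0 t (add_zero t)).mono_left nhdsWithin_le_nhds
  refine tendsto_straddle_iff.2 ⟨?_, ?_, ?_⟩
  · simpa using (tendsto_const_nhds (x := t)).min hadd
  · simpa using (tendsto_const_nhds (x := t)).max hadd
  · filter_upwards [self_mem_nhdsWithin] with e he
    refine ⟨min_le_left _ _, le_max_left _ _, ?_⟩
    rw [min_lt_max]
    simpa [eq_comm] using he

instance straddle_neBot (t : ℝ) : (straddle t).NeBot :=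
  (tendsto_min_max_straddle t).neBot

theorem tendsto_zero_of_tendsto_div_straddle {g : ℝ × ℝ → ℝ} {t m : ℝ}
    (h : Tendsto (fun p => g p / (p.2 - p.1)) (straddle t) (𝓝 m)) :
    Tendsto g (straddle t) (𝓝 0) := by
  have hlen : Tendsto (fun p : ℝ × ℝ => p.2 - p.1) (straddle t) (𝓝 0) := by
    simpa using (tendsto_snd_straddle t).sub (tendsto_fst_straddle t)
  refine (mul_zero m ▸ h.mul hlen).congr' ?_
  filter_upwards [eventually_straddle t] with p hp
  exact div_mul_cancel₀ _ (sub_pos.2 hp.2.2).ne'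

theorem tendsto_slope_straddle {f : ℝ → ℝ} {f' t : ℝ} (hf : HasDerivAt f f' t) :
    Tendsto (fun p => (f p.2 - f p.1) / (p.2 - p.1)) (straddle t) (𝓝 f') := by
  rw [hasDerivAt_iff_isLittleO] at hf
  refine Metric.tendsto_nhds.2 fun ε hε => ?_
  have hnear := hf.def (half_pos hε)
  filter_upwards [(tendsto_fst_straddle t).eventually hnear,
    (tendsto_snd_straddle t).eventually hnear, eventually_straddle t]
    with p hp₁ hp₂ ⟨hle₁, hle₂, hlt⟩
  simp only [Real.norm_eq_abs, smul_eq_mul] at hp₁ hp₂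
  rw [abs_of_nonpos (sub_nonpos.2 hle₁)] at hp₁
  rw [abs_of_nonneg (sub_nonneg.2 hle₂)] at hp₂
  have hpos : 0 < p.2 - p.1 := sub_pos.2 hlt
  rw [Real.dist_eq, div_sub' hpos.ne', abs_div, abs_of_pos hpos, div_lt_iff₀ hpos]
  calc |f p.2 - f p.1 - (p.2 - p.1) * f'|
      = |(f p.2 - f t - (p.2 - t) * f') - (f p.1 - f t - (p.1 - t) * f')| := by ring_nf
    _ ≤ |f p.2 - f t - (p.2 - t) * f'| + |f p.1 - f t - (p.1 - t) * f'| := abs_sub _ _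
    _ ≤ ε / 2 * (p.2 - p.1) := by linarith
    _ < ε * (p.2 - p.1) := by gcongr; exact half_lt_self hε

theorem intervalIntegrable_mono_Icc {a b t u : ℝ} {f : ℝ → ℝ} (hf : IntervalIntegrable f volume a b)
    (hat : a ≤ t) (htu : t ≤ u) (hub : u ≤ b) : IntervalIntegrable f volume t u :=
  hf.mono_set <| by
    rw [uIcc_of_le htu, uIcc_of_le (hat.trans (htu.trans hub))]
    exact Icc_subset_Icc hat hub

theorem integral_sub_integral_left {a b t u : ℝ} {f : ℝ → ℝ} (hf : IntervalIntegrable f volume a b)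
    (hat : a ≤ t) (htu : t ≤ u) (hub : u ≤ b) :
    (∫ r in a..u, f r) - ∫ r in a..t, f r = ∫ r in t..u, f r :=
  intervalIntegral.integral_interval_sub_left
    (intervalIntegrable_mono_Icc hf le_rfl (hat.trans htu) hub)
    (intervalIntegrable_mono_Icc hf le_rfl hat (htu.trans hub))

theorem ae_restrict_Ioc_of_Ioo {a b : ℝ} {P : ℝ → Prop}
    (h : ∀ᵐ t : ℝ, t ∈ Ioo a b → P t) : ∀ᵐ t ∂volume.restrict (Ioc a b), P t := by
  rw [← restrict_Ioo_eq_restrict_Ioc]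
  exact (ae_restrict_iff' measurableSet_Ioo).2 h

theorem integral_mono_of_ae_Ioo {a b : ℝ} {f g : ℝ → ℝ} (hab : a ≤ b)
    (hf : IntervalIntegrable f volume a b) (hg : IntervalIntegrable g volume a b)
    (h : ∀ᵐ t : ℝ, t ∈ Ioo a b → f t ≤ g t) : ∫ t in a..b, f t ≤ ∫ t in a..b, g t := by
  rw [intervalIntegral.integral_of_le hab, intervalIntegral.integral_of_le hab]
  exact integral_mono_ae hf.1 hg.1 (ae_restrict_Ioc_of_Ioo h)

theorem intervalIntegrable_of_abs_le {a b : ℝ} {f g : ℝ → ℝ} (hab : a ≤ b)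
    (hg : IntervalIntegrable g volume a b) (hf : AEMeasurable f (volume.restrict (Ioc a b)))
    (h : ∀ᵐ t : ℝ, t ∈ Ioo a b → |f t| ≤ g t) : IntervalIntegrable f volume a b := by
  rw [← uIoc_of_le hab] at hf
  exact hg.mono_fun' hf.aestronglyMeasurable (uIoc_of_le hab ▸ ae_restrict_Ioc_of_Ioo h)

theorem ae_tendsto_average_straddle {a b : ℝ} {f : ℝ → ℝ} (hf : IntervalIntegrable f volume a b) :
    ∀ᵐ t : ℝ, t ∈ Ioo a b →
      Tendsto (fun p : ℝ × ℝ => ⨍ r in p.1..p.2, f r) (straddle t) (𝓝 (f t)) := by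
  filter_upwards [hf.ae_hasDerivAt_integral] with t hderiv ht
  have htab : t ∈ uIcc a b := uIcc_of_le (ht.1.trans ht.2).le ▸ Ioo_subset_Icc_self ht
  refine (tendsto_slope_straddle (hderiv htab a left_mem_uIcc)).congr' ?_
  filter_upwards [eventually_straddle_Icc ht] with p ⟨hap, hlt, hpb⟩
  rw [integral_sub_integral_left hf hap hlt.le hpb, interval_average_eq_div]

theorem tendsto_grid_straddle (t : ℝ) :
    Tendsto (fun n : ℕ => ((⌊n * t⌋ / n : ℝ), ((⌊n * t⌋ + 1) / n : ℝ))) atTop (straddle t) := by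
  have hinv : Tendsto (fun n : ℕ => (n : ℝ)⁻¹) atTop (𝓝 0) := tendsto_inv_atTop_nhds_zero_nat
  have hcell : ∀ᶠ n : ℕ in atTop, (⌊n * t⌋ / n : ℝ) ≤ t ∧ t < (⌊n * t⌋ + 1) / n := by
    filter_upwards [eventually_gt_atTop 0] with n hn
    have hn' : (0 : ℝ) < n := Nat.cast_pos.2 hn
    rw [div_le_iff₀ hn', lt_div_iff₀ hn', mul_comm t]
    exact ⟨Int.floor_le _, Int.lt_floor_add_one _⟩
  have hfst : Tendsto (fun n : ℕ => (⌊n * t⌋ / n : ℝ)) atTop (𝓝 t) := by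
    refine tendsto_of_tendsto_of_tendsto_of_le_of_le' (by simpa using hinv.const_sub t)
      tendsto_const_nhds ?_ (hcell.mono fun n hn => hn.1)
    filter_upwards [hcell] with n hn
    rw [add_div, one_div] at hn
    exact sub_le_iff_le_add.2 hn.2.le
  refine tendsto_straddle_iff.2
    ⟨hfst, ?_, hcell.mono fun n hn => ⟨hn.1, hn.2.le, hn.1.trans_lt hn.2⟩⟩
  simpa only [add_div, one_div, add_zero] using hfst.add hinv

theorem aemeasurable_of_tendsto_straddle {E : Type*} [TopologicalSpace E]
    [TopologicalSpace.PseudoMetrizableSpace E] [MeasurableSpace E] [BorelSpace E] {μ : Measure ℝ}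
    {F : ℝ × ℝ → E} {f : ℝ → E} (h : ∀ᵐ t ∂μ, Tendsto F (straddle t) (𝓝 (f t))) :
    AEMeasurable f μ := by
  refine aemeasurable_of_tendsto_metrizable_ae atTop (fun n : ℕ => ?_)
    (h.mono fun t ht => ht.comp (tendsto_grid_straddle t))
  exact ((measurable_from_top (f := fun k : ℤ => F (k / n, (k + 1) / n))).comp
    (Int.measurable_floor.comp (measurable_const_mul (n : ℝ)))).aemeasurable

/-! ### Metric derivatives -/

/-- The axioms of a pseudometric for an unbundled distance function, such as a member `d s` of a
family of metrics. -/
structure IsPseudoDist {X : Type*} (dst : X → X → ℝ) : Prop where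
  self : ∀ x, dst x x = 0
  symm : ∀ x y, dst x y = dst y x
  triangle : ∀ x y z, dst x z ≤ dst x y + dst y z

/-- The average speed of the curve `β` over the time interval `[p.1, p.2]`. -/
def meanSpeed {X : Type*} (dst : X → X → ℝ) (β : ℝ → X) (p : ℝ × ℝ) : ℝ :=
  dst (β p.1) (β p.2) / (p.2 - p.1)

/-- The supremum of the speeds at which the distances from the points `z n` change along `β`.
When `z` is dense along `β`, this is the metric derivative of `β`. -/
def supDistSpeed {X : Type*} (dst : X → X → ℝ) (z : ℕ → X) (β : ℝ → X) (t : ℝ) : ℝ :=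
  ⨆ n, |deriv (fun u => dst (z n) (β u)) t|

section MetricDerivative

variable {X : Type*} {dst : X → X → ℝ} {β : ℝ → X} {a b : ℝ}

theorem IsPseudoDist.nonneg (hd : IsPseudoDist dst) (x y : X) : 0 ≤ dst x y := by
  linarith [hd.triangle x y x, hd.self x, hd.symm x y]

theorem IsPseudoDist.abs_sub_le (hd : IsPseudoDist dst) (z x y : X) :
    |dst z x - dst z y| ≤ dst x y := by
  rw [abs_le]
  constructor <;> linarith [hd.triangle z x y, hd.triangle z y x, hd.symm x y]

theorem ACOn.mono {t u : ℝ} (hβ : ACOn dst β a b) (hat : a ≤ t) (hub : u ≤ b) :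
    ACOn dst β t u := by
  obtain ⟨g, hg, hle⟩ := hβ
  have hsub : Icc t u ⊆ Icc a b := Icc_subset_Icc hat hub
  exact ⟨g, hg.mono_set hsub, fun r v hr hv hrv => hle (hsub hr) (hsub hv) hrv⟩

theorem ACOn.exists_intervalIntegrable (hβ : ACOn dst β a b) (hab : a ≤ b) :
    ∃ g : ℝ → ℝ, IntervalIntegrable g volume a b ∧
      ∀ ⦃t u⦄, a ≤ t → t ≤ u → u ≤ b → dst (β t) (β u) ≤ ∫ r in t..u, g r := by
  obtain ⟨g, hg, hle⟩ := hβ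
  exact ⟨g, (intervalIntegrable_iff_integrableOn_Icc_of_le hab).2 hg, fun t u hat htu hub =>
    hle ⟨hat, htu.trans hub⟩ ⟨hat.trans htu, hub⟩ htu⟩

theorem ACOn.comp_dist (hd : IsPseudoDist dst) (hβ : ACOn dst β a b) (z : X) :
    ACOn rdist (fun t => dst z (β t)) a b := by
  obtain ⟨g, hg, hle⟩ := hβ
  exact ⟨g, hg, fun t u ht hu htu => (hd.abs_sub_le z _ _).trans (hle ht hu htu)⟩

theorem ACOn.absolutelyContinuousOnInterval {φ : ℝ → ℝ} (hφ : ACOn rdist φ a b) (hab : a ≤ b) :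
    AbsolutelyContinuousOnInterval φ a b := by
  obtain ⟨g, hg, hle⟩ := hφ.exists_intervalIntegrable hab
  have hdist : ∀ t ∈ Icc a b, ∀ u ∈ Icc a b,
      dist (φ t) (φ u) ≤ dist (∫ r in a..t, g r) (∫ r in a..u, g r) := by
    intro t ht u hu
    wlog htu : t ≤ u generalizing t u
    · rw [dist_comm (φ t), dist_comm (∫ r in a..t, g r)]
      exact this u hu t ht (le_of_not_ge htu)
    rw [dist_comm (∫ r in a..t, g r), Real.dist_eq (∫ r in a..u, g r),
      integral_sub_integral_left hg ht.1 htu hu.2]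
    exact (hle ht.1 htu hu.2).trans (le_abs_self _)
  refine squeeze_zero' (Eventually.of_forall fun E => Finset.sum_nonneg fun _ _ => dist_nonneg)
    (eventually_inf_principal.2 (Eventually.of_forall fun E hE => Finset.sum_le_sum fun i hi => ?_))
    (hg.absolutelyContinuousOnInterval_intervalIntegral (c := a) left_mem_uIcc)
  have hmem := hE.1 i hi
  rw [uIcc_of_le hab] at hmem
  exact hdist _ hmem.1 _ hmem.2

theorem ACOn.continuousOn_rdist {φ : ℝ → ℝ} (hφ : ACOn rdist φ a b) (hab : a ≤ b) :
    ContinuousOn φ (Icc a b) :=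
  uIcc_of_le hab ▸ (hφ.absolutelyContinuousOnInterval hab).continuousOn

theorem ACOn.tendsto_dist (hd : IsPseudoDist dst) (hβ : ACOn dst β a b) (hab : a ≤ b) {t : ℝ}
    (ht : t ∈ Icc a b) : Tendsto (fun u => dst (β t) (β u)) (𝓝[Icc a b] t) (𝓝 0) := by
  simpa only [ContinuousWithinAt, hd.self] using
    (hβ.comp_dist hd (β t)).continuousOn_rdist hab t ht

theorem ACOn.ae_differentiableAt_dist (hd : IsPseudoDist dst) (hβ : ACOn dst β a b) (hab : a ≤ b)
    (z : X) : ∀ᵐ t : ℝ, t ∈ Ioo a b → DifferentiableAt ℝ (fun u => dst z (β u)) t := by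
  filter_upwards [((hβ.comp_dist hd z).absolutelyContinuousOnInterval hab).ae_differentiableAt]
    with t hdiff ht using hdiff (uIcc_of_le hab ▸ Ioo_subset_Icc_self ht)

theorem tendsto_abs_slope_dist {z : X} {t : ℝ}
    (hdiff : DifferentiableAt ℝ (fun u => dst z (β u)) t) :
    Tendsto (fun p => |dst z (β p.1) - dst z (β p.2)| / (p.2 - p.1)) (straddle t)
      (𝓝 |deriv (fun u => dst z (β u)) t|) := by
  refine (tendsto_slope_straddle hdiff.hasDerivAt).abs.congr' ?_
  filter_upwards [eventually_straddle t] with p hp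
  rw [abs_div, abs_sub_comm, abs_of_pos (sub_pos.2 hp.2.2)]

theorem ae_abs_deriv_dist_le (hd : IsPseudoDist dst) (hβ : ACOn dst β a b) (hab : a ≤ b)
    {g : ℝ → ℝ} (hg : IntervalIntegrable g volume a b)
    (hle : ∀ ⦃t u⦄, a ≤ t → t ≤ u → u ≤ b → dst (β t) (β u) ≤ ∫ r in t..u, g r) (z : X) :
    ∀ᵐ t : ℝ, t ∈ Ioo a b → |deriv (fun u => dst z (β u)) t| ≤ g t := by
  filter_upwards [hβ.ae_differentiableAt_dist hd hab z, ae_tendsto_average_straddle hg]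
    with t hdiff hleb ht
  refine le_of_tendsto_of_tendsto (tendsto_abs_slope_dist (hdiff ht)) (hleb ht) ?_
  filter_upwards [eventually_straddle_Icc ht] with p ⟨hap, hlt, hpb⟩
  rw [interval_average_eq_div]
  exact div_le_div_of_nonneg_right ((hd.abs_sub_le _ _ _).trans (hle hap hlt.le hpb))
    (sub_nonneg.2 hlt.le)

theorem supDistSpeed_nonneg (z : ℕ → X) (t : ℝ) : 0 ≤ supDistSpeed dst z β t :=
  Real.iSup_nonneg fun _ => abs_nonneg _

theorem ACOn.intervalIntegrable_supDistSpeed (hd : IsPseudoDist dst) (hβ : ACOn dst β a b)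
    (hab : a ≤ b) (z : ℕ → X) : IntervalIntegrable (supDistSpeed dst z β) volume a b := by
  obtain ⟨g, hg, hle⟩ := hβ.exists_intervalIntegrable hab
  have hmeas : Measurable (supDistSpeed dst z β) :=
    Measurable.iSup fun n => (measurable_deriv _).abs
  refine intervalIntegrable_of_abs_le hab hg hmeas.aemeasurable ?_
  filter_upwards [ae_all_iff.2 fun n => ae_abs_deriv_dist_le hd hβ hab hg hle (z n)] with t hbd ht
  rw [abs_of_nonneg (supDistSpeed_nonneg z t)]
  exact ciSup_le fun n => hbd n ht

theorem ACOn.ae_abs_deriv_dist_le_supDistSpeed (hd : IsPseudoDist dst) (hβ : ACOn dst β a b)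
    (hab : a ≤ b) (z : ℕ → X) : ∀ᵐ t : ℝ, t ∈ Ioo a b →
      ∀ n, |deriv (fun u => dst (z n) (β u)) t| ≤ supDistSpeed dst z β t := by
  obtain ⟨g, hg, hle⟩ := hβ.exists_intervalIntegrable hab
  filter_upwards [ae_all_iff.2 fun n => ae_abs_deriv_dist_le hd hβ hab hg hle (z n)] with t hbd ht n
  exact le_ciSup (f := fun n => |deriv (fun u => dst (z n) (β u)) t|)
    ⟨g t, forall_mem_range.2 fun n => hbd n ht⟩ n

theorem ACOn.dist_sub_dist_le_integral_supDistSpeed (hd : IsPseudoDist dst) (hβ : ACOn dst β a b)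
    (hab : a ≤ b) (z : ℕ → X) (n : ℕ) :
    dst (z n) (β b) - dst (z n) (β a) ≤ ∫ r in a..b, supDistSpeed dst z β r := by
  have hac := (hβ.comp_dist hd (z n)).absolutelyContinuousOnInterval hab
  rw [← hac.integral_deriv_eq_sub]
  refine integral_mono_of_ae_Ioo hab hac.intervalIntegrable_deriv
    (hβ.intervalIntegrable_supDistSpeed hd hab z) ?_
  filter_upwards [hβ.ae_abs_deriv_dist_le_supDistSpeed hd hab z] with r hr hrab
  exact (le_abs_self _).trans (hr hrab n)

theorem ACOn.dist_le_integral_supDistSpeed (hd : IsPseudoDist dst) (hβ : ACOn dst β a b)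
    (hab : a ≤ b) {z : ℕ → X} (hz : ∀ ε > 0, ∃ n, dst (β a) (z n) < ε) :
    dst (β a) (β b) ≤ ∫ r in a..b, supDistSpeed dst z β r := by
  refine le_of_forall_pos_le_add fun ε hε => ?_
  obtain ⟨n, hn⟩ := hz (ε / 2) (half_pos hε)
  linarith [hβ.dist_sub_dist_le_integral_supDistSpeed hd hab z n,
    hd.triangle (β a) (z n) (β b), hd.symm (β a) (z n)]

theorem ACOn.ae_tendsto_meanSpeed_supDistSpeed (hd : IsPseudoDist dst) (hβ : ACOn dst β a b)
    (hab : a ≤ b) {z : ℕ → X} (hz : ∀ t ∈ Icc a b, ∀ ε > 0, ∃ n, dst (β t) (z n) < ε) :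
    ∀ᵐ t : ℝ, t ∈ Ioo a b →
      Tendsto (meanSpeed dst β) (straddle t) (𝓝 (supDistSpeed dst z β t)) := by
  filter_upwards [ae_all_iff.2 fun n => hβ.ae_differentiableAt_dist hd hab (z n),
    ae_tendsto_average_straddle (hβ.intervalIntegrable_supDistSpeed hd hab z)] with t hdiff hleb ht
  refine tendsto_order.2 ⟨fun c hc => ?_, fun c hc => ?_⟩
  · obtain ⟨n, hn⟩ := exists_lt_of_lt_ciSup hc
    filter_upwards [(tendsto_abs_slope_dist (hdiff n ht)).eventually (lt_mem_nhds hn),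
      eventually_straddle t] with p hcp ⟨_, _, hlt⟩
    exact hcp.trans_le (div_le_div_of_nonneg_right (hd.abs_sub_le _ _ _) (sub_nonneg.2 hlt.le))
  · filter_upwards [(hleb ht).eventually (gt_mem_nhds hc), eventually_straddle_Icc ht]
      with p hcp ⟨hap, hlt, hpb⟩
    rw [interval_average_eq_div] at hcp
    refine (div_le_div_of_nonneg_right ?_ (sub_nonneg.2 hlt.le)).trans_lt hcp
    exact (hβ.mono hap hpb).dist_le_integral_supDistSpeed hd hlt.le (hz _ ⟨hap, hlt.le.trans hpb⟩)

theorem ACOn.exists_dense_seq (hd : IsPseudoDist dst) (hβ : ACOn dst β a b) (hab : a ≤ b) :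
    ∃ z : ℕ → X, ∀ t ∈ Icc a b, ∀ ε > 0, ∃ n, dst (β t) (z n) < ε := by
  have : Nonempty (Icc a b) := ⟨a, left_mem_Icc.2 hab⟩
  refine ⟨fun n => β (TopologicalSpace.denseSeq (Icc a b) n), fun t ht ε hε => ?_⟩
  have hnear := (hβ.tendsto_dist hd hab ht).eventually (gt_mem_nhds hε)
  rw [← map_nhds_subtype_val ⟨t, ht⟩] at hnear
  exact (TopologicalSpace.denseRange_denseSeq (Icc a b)).mem_nhds hnear

theorem mSpeed_eq_of_tendsto_meanSpeed (hd : IsPseudoDist dst) {t m : ℝ}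
    (h : Tendsto (meanSpeed dst β) (straddle t) (𝓝 m)) : mSpeed dst β t = m := by
  refine ((h.comp (tendsto_min_max_straddle t)).congr fun e => ?_).limsup_eq
  rw [Function.comp_apply, meanSpeed]
  rcases le_total 0 e with he | he
  · rw [min_eq_left (by linarith), max_eq_right (by linarith), add_sub_cancel_left,
      abs_of_nonneg he, hd.symm]
  · rw [min_eq_right (by linarith), max_eq_left (by linarith), abs_of_nonpos he]
    congr 1
    ring

theorem ACOn.exists_ae_mSpeed_eq (hd : IsPseudoDist dst) (hβ : ACOn dst β a b) (hab : a ≤ b) :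
    ∃ z : ℕ → X, (∀ t ∈ Icc a b, ∀ ε > 0, ∃ n, dst (β t) (z n) < ε) ∧
      ∀ᵐ t : ℝ, t ∈ Ioo a b → mSpeed dst β t = supDistSpeed dst z β t := by
  obtain ⟨z, hz⟩ := hβ.exists_dense_seq hd hab
  refine ⟨z, hz, ?_⟩
  filter_upwards [hβ.ae_tendsto_meanSpeed_supDistSpeed hd hab hz] with t hlim ht
  exact mSpeed_eq_of_tendsto_meanSpeed hd (hlim ht)

theorem ACOn.ae_tendsto_meanSpeed (hd : IsPseudoDist dst) (hβ : ACOn dst β a b) (hab : a ≤ b) :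
    ∀ᵐ t : ℝ, t ∈ Ioo a b →
      Tendsto (meanSpeed dst β) (straddle t) (𝓝 (mSpeed dst β t)) := by
  obtain ⟨z, hz, heq⟩ := hβ.exists_ae_mSpeed_eq hd hab
  filter_upwards [hβ.ae_tendsto_meanSpeed_supDistSpeed hd hab hz, heq] with t hlim heqt ht
  exact heqt ht ▸ hlim ht

theorem ACOn.intervalIntegrable_mSpeed (hd : IsPseudoDist dst) (hβ : ACOn dst β a b)
    (hab : a ≤ b) : IntervalIntegrable (mSpeed dst β) volume a b := by
  obtain ⟨z, -, heq⟩ := hβ.exists_ae_mSpeed_eq hd hab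
  refine (hβ.intervalIntegrable_supDistSpeed hd hab z).congr_ae ?_
  rw [uIoc_of_le hab]
  exact ae_restrict_Ioc_of_Ioo (heq.mono fun t ht htab => (ht htab).symm)

theorem ACOn.dist_le_integral_mSpeed (hd : IsPseudoDist dst) (hβ : ACOn dst β a b) (hab : a ≤ b) :
    dst (β a) (β b) ≤ ∫ r in a..b, mSpeed dst β r := by
  obtain ⟨z, hz, heq⟩ := hβ.exists_ae_mSpeed_eq hd hab
  refine (hβ.dist_le_integral_supDistSpeed hd hab (hz a (left_mem_Icc.2 hab))).trans ?_
  exact integral_mono_of_ae_Ioo hab (hβ.intervalIntegrable_supDistSpeed hd hab z)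
    (hβ.intervalIntegrable_mSpeed hd hab) (heq.mono fun t ht htab => (ht htab).ge)

theorem ACOn.meanSpeed_le_average (hd : IsPseudoDist dst) (hβ : ACOn dst β a b)
    (hab : a ≤ b) : meanSpeed dst β (a, b) ≤ ⨍ r in a..b, mSpeed dst β r := by
  rw [meanSpeed, interval_average_eq_div]
  exact div_le_div_of_nonneg_right (hβ.dist_le_integral_mSpeed hd hab) (sub_nonneg.2 hab)

end MetricDerivative

/-! ### The generalized metric speed -/

/-- The metrics `d s`, `s ∈ J`, agree up to the factor `C` at pairs of points of `K` which one of
them puts at distance less than `r`. This is the form in which condition (C) is used. -/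
structure ComparableOn {X : Type*} (d : ℝ → X → X → ℝ) (J : Set ℝ) (K : Set X) (C r : ℝ) :
    Prop where
  radius_pos : 0 < r
  le_mul : ∀ ⦃s⦄, s ∈ J → ∀ ⦃s'⦄, s' ∈ J → ∀ ⦃u⦄, u ∈ J → ∀ ⦃x⦄, x ∈ K → ∀ ⦃y⦄, y ∈ K →
    d u x y < r → d s x y ≤ C * d s' x y

theorem ComparableOn.meanSpeed_le {X : Type*} {d : ℝ → X → X → ℝ} {J : Set ℝ} {K : Set X}
    {C r s s' u : ℝ} {β : ℝ → X} (hJ : ComparableOn d J K C r) (hs : s ∈ J) (hs' : s' ∈ J)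
    (hu : u ∈ J) {p : ℝ × ℝ} (hp : p.1 ≤ p.2) (hp₁ : β p.1 ∈ K) (hp₂ : β p.2 ∈ K)
    (hr : d u (β p.1) (β p.2) < r) : meanSpeed (d s) β p ≤ C * meanSpeed (d s') β p := by
  rw [meanSpeed, meanSpeed, mul_div_assoc']
  exact div_le_div_of_nonneg_right (hJ.le_mul hs hs' hu hp₁ hp₂ hr) (sub_nonneg.2 hp)

theorem exists_tendsto_of_forall_squeeze {ι : Type*} {l : Filter ι} [l.NeBot] {f g : ι → ℝ}
    (hf : ∀ᶠ i in l, 0 ≤ f i) (h : ∀ C > (1 : ℝ), ∃ m x y, Tendsto x l (𝓝 m) ∧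
      Tendsto y l (𝓝 m) ∧ ∀ᶠ i in l, x i ≤ C * f i ∧ f i ≤ g i ∧ g i ≤ C * y i) :
    ∃ c, Tendsto f l (𝓝 c) ∧ Tendsto g l (𝓝 c) := by
  obtain ⟨m, x, y, -, hy, hxy⟩ := h 2 one_lt_two
  have hfg : ∀ᶠ i in l, f i ≤ g i := hxy.mono fun i hi => hi.2.1
  have hg_le : IsBoundedUnder (· ≤ ·) l g :=
    (hy.const_mul 2).isBoundedUnder_le.mono_le (hxy.mono fun i hi => hi.2.2)
  have hf_ge : IsBoundedUnder (· ≥ ·) l f := ⟨0, hf⟩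
  have hg_ge : IsBoundedUnder (· ≥ ·) l g := hf_ge.mono_ge hfg
  have hf_le : IsBoundedUnder (· ≤ ·) l f := hg_le.mono_le hfg
  have hsq : ∀ C > (1 : ℝ), limsup g l ≤ C * (C * liminf f l) := by
    intro C hC
    have hC0 : 0 < C := one_pos.trans hC
    obtain ⟨m, x, y, hx, hy, hxy⟩ := h C hC
    have hlow : m / C ≤ liminf f l := by
      rw [← (hx.div_const C).liminf_eq]
      refine liminf_le_liminf (hxy.mono fun i hi => ?_) (hx.div_const C).isBoundedUnder_ge
        hf_le.isCoboundedUnder_ge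
      exact (div_le_iff₀' hC0).2 hi.1
    have hupp : limsup g l ≤ C * m := by
      rw [← (hy.const_mul C).limsup_eq]
      exact limsup_le_limsup (hxy.mono fun i hi => hi.2.2) hg_ge.isCoboundedUnder_le
        (hy.const_mul C).isBoundedUnder_le
    exact hupp.trans (mul_le_mul_of_nonneg_left ((div_le_iff₀' hC0).1 hlow) hC0.le)
  have hle : limsup g l ≤ liminf f l := by
    have hlim : Tendsto (fun C : ℝ => C * (C * liminf f l)) (𝓝[>] 1) (𝓝 (liminf f l)) :=
      (Continuous.tendsto' (by fun_prop) _ _ (by ring)).mono_left nhdsWithin_le_nhds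
    exact ge_of_tendsto hlim (eventually_mem_of_tendsto_nhdsWithin tendsto_id |>.mono hsq)
  exact ⟨liminf f l,
    tendsto_of_le_liminf_of_limsup_le le_rfl
      ((limsup_le_limsup hfg hf_ge.isCoboundedUnder_le hg_le).trans hle) hf_le hf_ge,
    tendsto_of_le_liminf_of_limsup_le
      (liminf_le_liminf hfg hf_ge hg_le.isCoboundedUnder_ge) hle hg_le hg_ge⟩

section MetricFamily

variable {X : Type*} [TopologicalSpace X] {I J : Set ℝ} {K : Set X} {d : ℝ → X → X → ℝ}
  {β : ℝ → X} {C r a b s s' : ℝ}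

theorem IsMetricFamily.isPseudoDist (hd : IsMetricFamily I d) (hs : s ∈ I) : IsPseudoDist (d s) :=
  ⟨(hd s hs).1, (hd s hs).2.2.1, (hd s hs).2.2.2.1⟩

theorem IsMetricFamily.pos (hd : IsMetricFamily I d) (hs : s ∈ I) {x y : X} (hxy : x ≠ y) :
    0 < d s x y :=
  (hd s hs).2.1 x y hxy

theorem IsMetricFamily.hasBasis (hd : IsMetricFamily I d) (hs : s ∈ I) (x : X) :
    (𝓝 x).HasBasis (fun ε : ℝ => 0 < ε) (fun ε => {y | d s x y < ε}) :=
  (hd s hs).2.2.2.2 x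

theorem IsMetricFamily.continuousOn (hd : IsMetricFamily I d) (hs : s ∈ I)
    (hβ : ACOn (d s) β a b) (hab : a ≤ b) : ContinuousOn β (Icc a b) := fun t ht =>
  (hd.hasBasis hs (β t)).tendsto_right_iff.2 fun _ hε =>
    (hβ.tendsto_dist (hd.isPseudoDist hs) hab ht).eventually (gt_mem_nhds hε)

theorem CondC.exists_comparableOn (hdC : CondC I d) (hd : IsMetricFamily I d) (hIopen : IsOpen I)
    (hK : IsCompact K) (hs : s ∈ I) (hC : 1 < C) :
    ∃ J ∈ 𝓝 s, J ⊆ I ∧ ∃ r, ComparableOn d J K C r := by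
  obtain ⟨ε, hε, hεI⟩ := Metric.nhds_basis_closedBall.mem_iff.1 (hIopen.mem_nhds hs)
  obtain ⟨r, hr, ω, hω0, -, hωcont, hω⟩ := hdC _ K hεI (isCompact_closedBall s ε) hK
  have hωlog : ∀ᶠ v in 𝓝 0, ω v < Real.log C :=
    hωcont.eventually (gt_mem_nhds (hω0.symm ▸ Real.log_pos hC))
  obtain ⟨η, hη, hηω⟩ := Metric.eventually_nhds_iff.1 hωlog
  have hsub : Metric.closedBall s (min ε (η / 3)) ⊆ Metric.closedBall s ε :=
    Metric.closedBall_subset_closedBall (min_le_left _ _)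
  refine ⟨Metric.closedBall s (min ε (η / 3)),
    Metric.closedBall_mem_nhds s (lt_min hε (div_pos hη three_pos)), hsub.trans hεI,
    r, hr, ?_⟩
  intro v hv v' hv' u hu x hx y hy hur
  have hvI := hεI (hsub hv)
  have hvI' := hεI (hsub hv')
  rcases eq_or_ne x y with rfl | hxy
  · rw [(hd.isPseudoDist hvI).self, (hd.isPseudoDist hvI').self, mul_zero]
  have hbdd : BddBelow ((fun u => d u x y) '' Metric.closedBall s ε) :=
    ⟨0, forall_mem_image.2 fun u hu => (hd.isPseudoDist (hεI hu)).nonneg x y⟩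
  have hlog := (le_abs_self _).trans <| hω v (hsub hv) v' (hsub hv') x hx y hy hxy <|
    (csInf_le hbdd ⟨u, hsub hu, rfl⟩).trans_lt hur
  have hclose : dist |v - v'| 0 < η := by
    rw [Real.dist_0_eq_abs, abs_abs, ← Real.dist_eq]
    have := (dist_triangle_right v v' s).trans (add_le_add
      (hv.trans (min_le_right _ _)) (hv'.trans (min_le_right _ _)))
    linarith
  rw [← div_le_iff₀ (hd.pos hvI' hxy)]
  exact (Real.log_le_log_iff (div_pos (hd.pos hvI hxy) (hd.pos hvI' hxy)) (one_pos.trans hC)).1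
    (hlog.trans (hηω hclose).le)

theorem ComparableOn.ae_mSpeed_le (hJ : ComparableOn d J K C r) (hd : IsMetricFamily I d)
    (hJI : J ⊆ I) (hβ : ∀ s ∈ I, ACOn (d s) β a b) (hab : a ≤ b) (hβK : ∀ t ∈ Icc a b, β t ∈ K)
    (hs : s ∈ J) (hs' : s' ∈ J) :
    ∀ᵐ t : ℝ, t ∈ Ioo a b → mSpeed (d s) β t ≤ C * mSpeed (d s') β t := by
  filter_upwards [(hβ s (hJI hs)).ae_tendsto_meanSpeed (hd.isPseudoDist (hJI hs)) hab,
    (hβ s' (hJI hs')).ae_tendsto_meanSpeed (hd.isPseudoDist (hJI hs')) hab] with t hlim hlim' ht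
  refine le_of_tendsto_of_tendsto (hlim ht) ((hlim' ht).const_mul C) ?_
  filter_upwards [eventually_straddle_Icc ht,
    (tendsto_zero_of_tendsto_div_straddle (hlim ht)).eventually (gt_mem_nhds hJ.radius_pos)]
    with p ⟨hap, hlt, hpb⟩ hr
  exact hJ.meanSpeed_le hs hs' hs hlt.le (hβK _ ⟨hap, hlt.le.trans hpb⟩)
    (hβK _ ⟨hap.trans hlt.le, hpb⟩) hr

theorem ComparableOn.average_mSpeed_le (hJ : ComparableOn d J K C r) (hd : IsMetricFamily I d)
    (hJI : J ⊆ I) (hβ : ∀ s ∈ I, ACOn (d s) β a b) (hab : a ≤ b) (hβK : ∀ t ∈ Icc a b, β t ∈ K)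
    (hs : s ∈ J) (hs' : s' ∈ J) :
    ⨍ t in a..b, mSpeed (d s) β t ≤ C * ⨍ t in a..b, mSpeed (d s') β t := by
  rw [interval_average_eq_div, interval_average_eq_div, mul_div_assoc',
    ← intervalIntegral.integral_const_mul]
  have hint : ∀ s ∈ J, IntervalIntegrable (mSpeed (d s) β) volume a b := fun s hs =>
    (hβ s (hJI hs)).intervalIntegrable_mSpeed (hd.isPseudoDist (hJI hs)) hab
  exact div_le_div_of_nonneg_right (integral_mono_of_ae_Ioo hab (hint s hs)
    ((hint s' hs').const_mul C) (hJ.ae_mSpeed_le hd hJI hβ hab hβK hs hs')) (sub_nonneg.2 hab)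

/- It is enough to know the limits of the mean speeds for the countably many metrics with rational
parameter: by (C) these control the mean speeds for all nearby parameters. -/
theorem ae_exists_tendsto_meanSpeed (hIopen : IsOpen I) (hd : IsMetricFamily I d)
    (hdC : CondC I d) (hβ : ∀ s ∈ I, ACOn (d s) β a b) (hab : a ≤ b) :
    ∀ᵐ t : ℝ, t ∈ Ioo a b → ∀ s ∈ I, ∃ c,
      Tendsto (fun z : ℝ × ℝ × ℝ => meanSpeed (d z.1) β z.2) (𝓝 s ×ˢ straddle t) (𝓝 c) ∧
      Tendsto (fun z : ℝ × ℝ × ℝ => ⨍ r in z.2.1..z.2.2, mSpeed (d z.1) β r)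
        (𝓝 s ×ˢ straddle t) (𝓝 c) := by
  have hrat : ∀ᵐ t : ℝ, ∀ q : ℚ, (q : ℝ) ∈ I → t ∈ Ioo a b →
      Tendsto (meanSpeed (d q) β) (straddle t) (𝓝 (mSpeed (d q) β t)) ∧
      Tendsto (fun p : ℝ × ℝ => ⨍ r in p.1..p.2, mSpeed (d q) β r) (straddle t)
        (𝓝 (mSpeed (d q) β t)) := by
    refine ae_all_iff.2 fun q => eventually_imp_distrib_left.2 fun hq => ?_
    filter_upwards [(hβ q hq).ae_tendsto_meanSpeed (hd.isPseudoDist hq) hab,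
      ae_tendsto_average_straddle ((hβ q hq).intervalIntegrable_mSpeed (hd.isPseudoDist hq) hab)]
      with t hmean havg ht using ⟨hmean ht, havg ht⟩
  filter_upwards [hrat] with t hrat ht s hs
  have hIcc : ∀ᶠ z in 𝓝 s ×ˢ straddle t, a ≤ z.2.1 ∧ z.2.1 < z.2.2 ∧ z.2.2 ≤ b :=
    tendsto_snd.eventually (eventually_straddle_Icc ht)
  refine exists_tendsto_of_forall_squeeze ?_ fun C hC => ?_
  · filter_upwards [tendsto_fst.eventually (hIopen.mem_nhds hs), hIcc] with z hz ⟨_, hlt, _⟩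
    exact div_nonneg ((hd.isPseudoDist hz).nonneg _ _) (sub_nonneg.2 hlt.le)
  have hK : IsCompact (β '' Icc a b) :=
    isCompact_Icc.image_of_continuousOn (hd.continuousOn hs (hβ s hs) hab)
  obtain ⟨J, hJs, hJI, r, hJ⟩ := hdC.exists_comparableOn hd hIopen hK hs hC
  obtain ⟨q, hqJ⟩ := Rat.denseRange_cast.mem_nhds hJs
  obtain ⟨hmean, havg⟩ := hrat q (hJI hqJ) ht
  refine ⟨mSpeed (d q) β t, _, _, hmean.comp tendsto_snd, havg.comp tendsto_snd, ?_⟩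
  filter_upwards [tendsto_fst.eventually hJs, hIcc, tendsto_snd.eventually
    ((tendsto_zero_of_tendsto_div_straddle hmean).eventually (gt_mem_nhds hJ.radius_pos))]
    with ⟨v, p⟩ hv ⟨hap, hlt, hpb⟩ hr
  have hβp : ∀ s ∈ I, ACOn (d s) β p.1 p.2 := fun s hs => (hβ s hs).mono hap hpb
  have hβK : ∀ u ∈ Icc p.1 p.2, β u ∈ β '' Icc a b := fun u hu =>
    mem_image_of_mem β (Icc_subset_Icc hap hpb hu)
  exact ⟨hJ.meanSpeed_le hqJ hv hqJ hlt.le (hβK _ (left_mem_Icc.2 hlt.le))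
      (hβK _ (right_mem_Icc.2 hlt.le)) hr,
    (hβp v (hJI hv)).meanSpeed_le_average (hd.isPseudoDist (hJI hv)) hlt.le,
    hJ.average_mSpeed_le hd hJI hβp hlt.le hβK hv hqJ⟩

theorem ae_tendsto_meanSpeed_genSpeed (hIopen : IsOpen I) (hd : IsMetricFamily I d)
    (hdC : CondC I d) (hβ : ∀ s ∈ I, ACOn (d s) β a b) (hab : a ≤ b) :
    ∀ᵐ t : ℝ, t ∈ Ioo a b → ∀ s ∈ I,
      Tendsto (fun z : ℝ × ℝ × ℝ => meanSpeed (d z.1) β z.2) (𝓝 s ×ˢ straddle t)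
        (𝓝 (genSpeed d β s t)) := by
  filter_upwards [ae_exists_tendsto_meanSpeed hIopen hd hdC hβ hab] with t hlim ht s hs
  obtain ⟨c, hmean, havg⟩ := hlim ht s hs
  suffices genSpeed d β s t = c from this ▸ hmean
  refine ((havg.comp (tendsto_const_nhds.prodMk (tendsto_min_max_straddle t))).congr
    fun e => ?_).limsup_eq
  have heq : (∫ r in t..(t + e), mSpeed (d s) β r) / e = ⨍ r in t..(t + e), mSpeed (d s) β r := by
    rw [interval_average_eq_div, add_sub_cancel_left]
  simp only [heq, Function.comp_apply, uIoc, min_eq_left min_le_max, max_eq_right min_le_max]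

end MetricFamily

/-! ### Causal curves -/

/- Minkowski's inequality: the velocity `(f, v)` of a plane curve is projected to its chord. -/
theorem sq_integral_add_sq_integral_le {f v g : ℝ → ℝ} {a b : ℝ} (hab : a ≤ b)
    (hf : IntervalIntegrable f volume a b) (hv : IntervalIntegrable v volume a b)
    (hg : IntervalIntegrable g volume a b)
    (h : ∀ᵐ t : ℝ, t ∈ Ioo a b → 0 ≤ g t ∧ f t ^ 2 + v t ^ 2 ≤ g t ^ 2) :
    (∫ t in a..b, f t) ^ 2 + (∫ t in a..b, v t) ^ 2 ≤ (∫ t in a..b, g t) ^ 2 := by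
  set A := ∫ t in a..b, f t
  set B := ∫ t in a..b, v t
  set r := √(A ^ 2 + B ^ 2)
  have hr0 : 0 ≤ r := Real.sqrt_nonneg _
  have hr : r ^ 2 = A ^ 2 + B ^ 2 := Real.sq_sqrt (by positivity)
  have hproj : ∀ᵐ t : ℝ, t ∈ Ioo a b → A * f t + B * v t ≤ r * g t := by
    filter_upwards [h] with t hfvg ht
    obtain ⟨hg0, hle⟩ := hfvg ht
    refine (abs_le_of_sq_le_sq' ?_ (mul_nonneg hr0 hg0)).2
    rw [mul_pow, hr]
    calc (A * f t + B * v t) ^ 2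
        ≤ (A * f t + B * v t) ^ 2 + (A * v t - B * f t) ^ 2 := by
          exact le_add_of_nonneg_right (sq_nonneg _)
      _ = (A ^ 2 + B ^ 2) * (f t ^ 2 + v t ^ 2) := by ring
      _ ≤ (A ^ 2 + B ^ 2) * g t ^ 2 := by gcongr
  have hint : r ^ 2 ≤ r * ∫ t in a..b, g t := by
    calc r ^ 2 = ∫ t in a..b, (A * f t + B * v t) := by
          rw [intervalIntegral.integral_add (hf.const_mul A) (hv.const_mul B),
            intervalIntegral.integral_const_mul, intervalIntegral.integral_const_mul, hr]
          ring
      _ ≤ ∫ t in a..b, r * g t := integral_mono_of_ae_Ioo hab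
          ((hf.const_mul A).add (hv.const_mul B)) (hg.const_mul r) hproj
      _ = r * ∫ t in a..b, g t := intervalIntegral.integral_const_mul r g
  rw [← hr]
  rcases hr0.eq_or_lt with hr_zero | hr_pos
  · rw [← hr_zero, zero_pow two_ne_zero]
    exact sq_nonneg _
  · exact pow_le_pow_left₀ hr0 (le_of_mul_le_mul_left (sq r ▸ hint) hr_pos) 2

/-- The data `I`, `d`, `h` of a generalized Lorentzian product. -/
structure IsGenProduct {X : Type*} [TopologicalSpace X] (I : Set ℝ) (d : ℝ → X → X → ℝ)
    (h : ℝ → X → ℝ) : Prop where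
  isOpen : IsOpen I
  metric : IsMetricFamily I d
  condC : CondC I d
  warp_pos : ∀ s ∈ I, ∀ x : X, 0 < h s x
  continuousOn_warp : ContinuousOn (fun z : ℝ × X => h z.1 z.2) (I ×ˢ (univ : Set X))

/-- The integrand of `lorLen`: the Lorentzian speed of the curve `(α, β)`. -/
def lorSpeed {X : Type*} (d : ℝ → X → X → ℝ) (h : ℝ → X → ℝ) (α : ℝ → ℝ) (β : ℝ → X) (t : ℝ) : ℝ :=
  √((h (α t) (β t)) ^ 2 * (deriv α t) ^ 2 - (genSpeed d β (α t) t) ^ 2)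

namespace FutureCausal

variable {X : Type*} {I J : Set ℝ} {K : Set X} {d : ℝ → X → X → ℝ} {h : ℝ → X → ℝ}
  {α : ℝ → ℝ} {β : ℝ → X} {a b c e s t C H r : ℝ}

theorem lt (hc : FutureCausal I d h α β a b) : a < b := hc.1.1

theorem acOn_fst (hc : FutureCausal I d h α β a b) : ACOn rdist α a b := hc.1.2.1

theorem acOn_snd (hc : FutureCausal I d h α β a b) : ∀ s ∈ I, ACOn (d s) β a b := hc.1.2.2.1

theorem mem (hc : FutureCausal I d h α β a b) (ht : t ∈ Icc a b) : α t ∈ I := hc.1.2.2.2 t ht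

theorem mono (hc : FutureCausal I d h α β a b) (hac : a ≤ c) (hce : c < e) (heb : e ≤ b) :
    FutureCausal I d h α β c e := by
  refine ⟨⟨hce, hc.acOn_fst.mono hac heb, fun s hs => (hc.acOn_snd s hs).mono hac heb,
    fun t ht => hc.mem (Icc_subset_Icc hac heb ht)⟩, ?_, ?_⟩
  · exact hc.2.1.mono fun t hfut ht => hfut (Ioo_subset_Ioo hac heb ht)
  · exact hc.2.2.mono fun t hcaus ht => hcaus (Ioo_subset_Ioo hac heb ht)

theorem continuousOn_fst (hc : FutureCausal I d h α β a b) : ContinuousOn α (Icc a b) :=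
  hc.acOn_fst.continuousOn_rdist hc.lt.le

theorem intervalIntegrable_deriv (hc : FutureCausal I d h α β a b) :
    IntervalIntegrable (deriv α) volume a b :=
  (hc.acOn_fst.absolutelyContinuousOnInterval hc.lt.le).intervalIntegrable_deriv

theorem integral_deriv (hc : FutureCausal I d h α β a b) : ∫ t in a..b, deriv α t = α b - α a :=
  (hc.acOn_fst.absolutelyContinuousOnInterval hc.lt.le).integral_deriv_eq_sub

theorem ae_hasDerivAt (hc : FutureCausal I d h α β a b) :
    ∀ᵐ t : ℝ, t ∈ Ioo a b → HasDerivAt α (deriv α t) t := by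
  filter_upwards [(hc.acOn_fst.absolutelyContinuousOnInterval hc.lt.le).ae_differentiableAt]
    with t hdiff ht using (hdiff (uIcc_of_le hc.lt.le ▸ Ioo_subset_Icc_self ht)).hasDerivAt

theorem le (hc : FutureCausal I d h α β a b) : α a ≤ α b := by
  rw [← sub_nonneg, ← hc.integral_deriv, ← intervalIntegral.integral_zero (a := a) (b := b)]
  exact integral_mono_of_ae_Ioo hc.lt.le intervalIntegrable_const hc.intervalIntegrable_deriv
    (hc.2.1.mono fun t hfut ht => (hfut ht).le)

theorem monotoneOn (hc : FutureCausal I d h α β a b) : MonotoneOn α (Icc a b) := by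
  intro t ht u hu htu
  rcases htu.eq_or_lt with rfl | hlt
  exacts [le_rfl, (hc.mono ht.1 hlt hu.2).le]

theorem mem_Icc (hc : FutureCausal I d h α β a b) (ht : t ∈ Icc a b) : α t ∈ Icc (α a) (α b) :=
  ⟨hc.monotoneOn (left_mem_Icc.2 hc.lt.le) ht ht.1,
    hc.monotoneOn ht (right_mem_Icc.2 hc.lt.le) ht.2⟩

variable [TopologicalSpace X]

theorem continuousOn_snd (hc : FutureCausal I d h α β a b) (hG : IsGenProduct I d h) :
    ContinuousOn β (Icc a b) :=
  have hs := hc.mem (left_mem_Icc.2 hc.lt.le)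
  hG.metric.continuousOn hs (hc.acOn_snd _ hs) hc.lt.le

theorem continuousOn_warp (hc : FutureCausal I d h α β a b) (hG : IsGenProduct I d h) :
    ContinuousOn (fun t => h (α t) (β t)) (Icc a b) :=
  hG.continuousOn_warp.comp (hc.continuousOn_fst.prodMk (hc.continuousOn_snd hG)) fun _ ht =>
    ⟨hc.mem ht, mem_univ _⟩

theorem ae_tendsto_meanSpeed (hc : FutureCausal I d h α β a b) (hG : IsGenProduct I d h) :
    ∀ᵐ t : ℝ, t ∈ Ioo a b → Tendsto (fun z : ℝ × ℝ × ℝ => meanSpeed (d z.1) β z.2)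
      (𝓝 (α t) ×ˢ straddle t) (𝓝 (genSpeed d β (α t) t)) := by
  filter_upwards [ae_tendsto_meanSpeed_genSpeed hG.isOpen hG.metric hG.condC hc.acOn_snd hc.lt.le]
    with t hlim ht using hlim ht (α t) (hc.mem (Ioo_subset_Icc_self ht))

theorem ae_tendsto_meanSpeed_fst (hc : FutureCausal I d h α β a b) (hG : IsGenProduct I d h) :
    ∀ᵐ t : ℝ, t ∈ Ioo a b → Tendsto (fun p : ℝ × ℝ => meanSpeed (d (α p.1)) β p) (straddle t)
      (𝓝 (genSpeed d β (α t) t)) := by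
  filter_upwards [hc.ae_tendsto_meanSpeed hG] with t hlim ht
  have hα : Tendsto α (𝓝 t) (𝓝 (α t)) :=
    hc.continuousOn_fst.continuousAt (Icc_mem_nhds ht.1 ht.2)
  exact (hlim ht).comp ((hα.comp (tendsto_fst_straddle t)).prodMk tendsto_id)

theorem ae_genSpeed_nonneg (hc : FutureCausal I d h α β a b) (hG : IsGenProduct I d h) :
    ∀ᵐ t : ℝ, t ∈ Ioo a b → 0 ≤ genSpeed d β (α t) t := by
  filter_upwards [hc.ae_tendsto_meanSpeed_fst hG] with t hlim ht
  refine ge_of_tendsto (hlim ht) ?_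
  filter_upwards [eventually_straddle_Icc ht] with p ⟨hap, hlt, hpb⟩
  have hd := hG.metric.isPseudoDist (hc.mem ⟨hap, hlt.le.trans hpb⟩)
  exact div_nonneg (hd.nonneg _ _) (sub_nonneg.2 hlt.le)

theorem ae_genSpeed_le (hc : FutureCausal I d h α β a b) (hG : IsGenProduct I d h) :
    ∀ᵐ t : ℝ, t ∈ Ioo a b → genSpeed d β (α t) t ≤ h (α t) (β t) * deriv α t := by
  filter_upwards [hc.2.1, hc.2.2] with t hfut hcaus ht
  have hh := hG.warp_pos _ (hc.mem (Ioo_subset_Icc_self ht)) (β t)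
  exact (abs_le_of_sq_le_sq' (mul_pow (h (α t) (β t)) _ 2 ▸ hcaus ht)
    (mul_pos hh (hfut ht)).le).2

theorem intervalIntegrable_warp_mul_deriv (hc : FutureCausal I d h α β a b)
    (hG : IsGenProduct I d h) :
    IntervalIntegrable (fun t => h (α t) (β t) * deriv α t) volume a b :=
  hc.intervalIntegrable_deriv.continuousOn_mul <|
    (uIcc_of_le hc.lt.le).symm ▸ hc.continuousOn_warp hG

theorem intervalIntegrable_genSpeed (hc : FutureCausal I d h α β a b) (hG : IsGenProduct I d h) :
    IntervalIntegrable (fun t => genSpeed d β (α t) t) volume a b := by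
  refine intervalIntegrable_of_abs_le hc.lt.le (hc.intervalIntegrable_warp_mul_deriv hG)
    (aemeasurable_of_tendsto_straddle (ae_restrict_Ioc_of_Ioo (hc.ae_tendsto_meanSpeed_fst hG))) ?_
  filter_upwards [hc.ae_genSpeed_nonneg hG, hc.ae_genSpeed_le hG] with t hnonneg hle ht
  exact (abs_of_nonneg (hnonneg ht)).trans_le (hle ht)

theorem ae_lorSpeed_le (hc : FutureCausal I d h α β a b) (hG : IsGenProduct I d h) :
    ∀ᵐ t : ℝ, t ∈ Ioo a b → lorSpeed d h α β t ≤ h (α t) (β t) * deriv α t := by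
  filter_upwards [hc.2.1] with t hfut ht
  have hh := hG.warp_pos _ (hc.mem (Ioo_subset_Icc_self ht)) (β t)
  refine Real.sqrt_le_iff.2 ⟨(mul_pos hh (hfut ht)).le, ?_⟩
  rw [mul_pow]
  exact sub_le_self _ (sq_nonneg _)

theorem intervalIntegrable_lorSpeed (hc : FutureCausal I d h α β a b) (hG : IsGenProduct I d h) :
    IntervalIntegrable (lorSpeed d h α β) volume a b := by
  have hwarp := hc.intervalIntegrable_warp_mul_deriv hG
  refine intervalIntegrable_of_abs_le hc.lt.le hwarp ?_ ?_
  · have hwarp_meas := hwarp.1.aestronglyMeasurable.aemeasurable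
    have hgen_meas := (hc.intervalIntegrable_genSpeed hG).1.aestronglyMeasurable.aemeasurable
    refine ((hwarp_meas.pow_const 2).sub (hgen_meas.pow_const 2)).sqrt.congr
      (.of_forall fun t => ?_)
    simp only [lorSpeed, mul_pow, Pi.sub_apply]
  · filter_upwards [hc.ae_lorSpeed_le hG] with t hle ht
    exact (abs_of_nonneg (Real.sqrt_nonneg _)).trans_le (hle ht)

theorem ae_mSpeed_le_mul_genSpeed (hc : FutureCausal I d h α β a b) (hG : IsGenProduct I d h)
    (hJ : ComparableOn d J K C r) (hJI : J ⊆ I) (hs : s ∈ J) (hαJ : ∀ t ∈ Ioo a b, α t ∈ J)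
    (hβK : ∀ t ∈ Ioo a b, β t ∈ K) :
    ∀ᵐ t : ℝ, t ∈ Ioo a b → mSpeed (d s) β t ≤ C * genSpeed d β (α t) t := by
  filter_upwards [hc.ae_tendsto_meanSpeed hG, (hc.acOn_snd s (hJI hs)).ae_tendsto_meanSpeed
    (hG.metric.isPseudoDist (hJI hs)) hc.lt.le] with t hgen hms ht
  have hgen : Tendsto (meanSpeed (d (α t)) β) (straddle t) (𝓝 (genSpeed d β (α t) t)) :=
    (hgen ht).comp (tendsto_const_nhds.prodMk tendsto_id)
  refine le_of_tendsto_of_tendsto (hms ht) (hgen.const_mul C) ?_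
  filter_upwards [eventually_straddle t,
    (tendsto_fst_straddle t).eventually (Ioo_mem_nhds ht.1 ht.2),
    (tendsto_snd_straddle t).eventually (Ioo_mem_nhds ht.1 ht.2),
    (tendsto_zero_of_tendsto_div_straddle hgen).eventually (gt_mem_nhds hJ.radius_pos)]
    with p hp hp₁ hp₂ hr
  exact hJ.meanSpeed_le hs (hαJ t ht) (hαJ t ht) hp.2.2.le (hβK _ hp₁) (hβK _ hp₂) hr

theorem dist_le_mul_integral_genSpeed (hc : FutureCausal I d h α β a b) (hG : IsGenProduct I d h)
    (hJ : ComparableOn d J K C r) (hJI : J ⊆ I) (hs : s ∈ J) (hαJ : ∀ t ∈ Ioo a b, α t ∈ J)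
    (hβK : ∀ t ∈ Ioo a b, β t ∈ K) :
    d s (β a) (β b) ≤ C * ∫ t in a..b, genSpeed d β (α t) t := by
  have hds := hG.metric.isPseudoDist (hJI hs)
  have hβ := hc.acOn_snd s (hJI hs)
  rw [← intervalIntegral.integral_const_mul]
  exact (hβ.dist_le_integral_mSpeed hds hc.lt.le).trans <|
    integral_mono_of_ae_Ioo hc.lt.le (hβ.intervalIntegrable_mSpeed hds hc.lt.le)
      ((hc.intervalIntegrable_genSpeed hG).const_mul C)
      (hc.ae_mSpeed_le_mul_genSpeed hG hJ hJI hs hαJ hβK)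

theorem integral_genSpeed_le (hc : FutureCausal I d h α β a b) (hG : IsGenProduct I d h)
    (hH : ∀ t ∈ Ioo a b, h (α t) (β t) ≤ H) :
    ∫ t in a..b, genSpeed d β (α t) t ≤ H * (α b - α a) := by
  rw [← hc.integral_deriv, ← intervalIntegral.integral_const_mul]
  refine integral_mono_of_ae_Ioo hc.lt.le (hc.intervalIntegrable_genSpeed hG)
    (hc.intervalIntegrable_deriv.const_mul H) ?_
  filter_upwards [hc.ae_genSpeed_le hG, hc.2.1] with t hle hfut ht
  exact (hle ht).trans (mul_le_mul_of_nonneg_right (hH t ht) (hfut ht).le)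

theorem sq_lorLen_add_sq_le (hc : FutureCausal I d h α β a b) (hG : IsGenProduct I d h)
    (hH : ∀ t ∈ Ioo a b, h (α t) (β t) ≤ H) :
    lorLen d h α β a b ^ 2 + (∫ t in a..b, genSpeed d β (α t) t) ^ 2 ≤
      (H * (α b - α a)) ^ 2 := by
  rw [← hc.integral_deriv, ← intervalIntegral.integral_const_mul]
  refine sq_integral_add_sq_integral_le hc.lt.le (hc.intervalIntegrable_lorSpeed hG)
    (hc.intervalIntegrable_genSpeed hG) (hc.intervalIntegrable_deriv.const_mul H) ?_
  filter_upwards [hc.2.1, hc.2.2] with t hfut hcaus ht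
  have hh := hG.warp_pos _ (hc.mem (Ioo_subset_Icc_self ht)) (β t)
  have hle := mul_le_mul_of_nonneg_right (hH t ht) (hfut ht).le
  refine ⟨(mul_pos hh (hfut ht)).le.trans hle, ?_⟩
  rw [Real.sq_sqrt (sub_nonneg.2 (hcaus ht)), sub_add_cancel, ← mul_pow]
  exact pow_le_pow_left₀ (mul_pos hh (hfut ht)).le hle 2

theorem lorLen_le_sqrt (hc : FutureCausal I d h α β a b) (hG : IsGenProduct I d h)
    (hJ : ComparableOn d J K C r) (hC : 0 < C) (hJI : J ⊆ I) (hs : s ∈ J)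
    (hαJ : ∀ t ∈ Ioo a b, α t ∈ J) (hβK : ∀ t ∈ Ioo a b, β t ∈ K)
    (hH : ∀ t ∈ Ioo a b, h (α t) (β t) ≤ H) :
    lorLen d h α β a b ≤ √((H * (α b - α a)) ^ 2 - (d s (β a) (β b) / C) ^ 2) := by
  have hdist : d s (β a) (β b) / C ≤ ∫ t in a..b, genSpeed d β (α t) t :=
    (div_le_iff₀' hC).2 (hc.dist_le_mul_integral_genSpeed hG hJ hJI hs hαJ hβK)
  have hdist0 : 0 ≤ d s (β a) (β b) / C :=
    div_nonneg ((hG.metric.isPseudoDist (hJI hs)).nonneg _ _) hC.le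
  refine Real.le_sqrt_of_sq_le (le_sub_iff_add_le.2 ?_)
  exact (add_le_add_right (pow_le_pow_left₀ hdist0 hdist 2) _).trans (hc.sq_lorLen_add_sq_le hG hH)

end FutureCausal

/-! ### Causal diamonds of nearby points -/

theorem forall_lt_of_forall_Ioo_lt {f : ℝ → ℝ} {a b δ : ℝ} (hf : ContinuousOn f (Icc a b))
    (h : ∀ v ∈ Icc a b, (∀ w ∈ Ioo a v, f w < δ) → f v < δ) : ∀ v ∈ Icc a b, f v < δ := by
  by_contra! ⟨v, hv, hfv⟩
  have hclosed : IsClosed (Icc a b ∩ f ⁻¹' Ici δ) :=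
    hf.preimage_isClosed_of_isClosed isClosed_Icc isClosed_Ici
  obtain ⟨T, ⟨hT, hfT⟩, hmin⟩ :=
    (isCompact_Icc.of_isClosed_subset hclosed inter_subset_left).exists_isLeast ⟨v, hv, hfv⟩
  refine (h T hT fun w hw => ?_).not_ge hfT
  by_contra! hfw
  exact (hmin ⟨⟨hw.1.le, hw.2.le.trans hT.2⟩, hfw⟩).not_gt hw.2

theorem exists_pos_sqrt_lt {x y v l : ℝ} (hl : √(x ^ 2 * y ^ 2 - v ^ 2) < l) :
    ∃ κ > 0, √(((x + κ) * y) ^ 2 - (v / (1 + κ)) ^ 2) < l := by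
  have hcont : ContinuousAt (fun κ => √(((x + κ) * y) ^ 2 - (v / (1 + κ)) ^ 2)) 0 := by
    fun_prop (disch := norm_num)
  have hnear : ∀ᶠ κ in 𝓝 0, √(((x + κ) * y) ^ 2 - (v / (1 + κ)) ^ 2) < l :=
    hcont.eventually (gt_mem_nhds (by simpa only [add_zero, div_one, mul_pow] using hl))
  exact ((eventually_mem_nhdsWithin (s := Ioi 0)).and (hnear.filter_mono nhdsWithin_le_nhds)).exists

theorem timeSep_le {X : Type*} {I : Set ℝ} {d : ℝ → X → X → ℝ} {h : ℝ → X → ℝ} {p q : ℝ × X}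
    {l : ℝ} (hl : ∀ a b α β, FutureCausal I d h α β a b → (α a, β a) = p → (α b, β b) = q →
      lorLen d h α β a b ≤ l) : timeSep I d h p q ≤ ENNReal.ofReal l := by
  refine sSup_le ?_
  rintro _ ⟨a, b, α, β, hc, hαa, hβa, hαb, hβb, rfl⟩
  exact ENNReal.ofReal_le_ofReal (hl a b α β hc (Prod.ext hαa hβa) (Prod.ext hαb hβb))

theorem FutureCausal.le_timeSep {X : Type*} {I : Set ℝ} {d : ℝ → X → X → ℝ} {h : ℝ → X → ℝ}
    {α : ℝ → ℝ} {β : ℝ → X} {a b : ℝ} (hc : FutureCausal I d h α β a b) :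
    ENNReal.ofReal (lorLen d h α β a b) ≤ timeSep I d h (α a, β a) (α b, β b) :=
  le_sSup ⟨a, b, α, β, hc, rfl, rfl, rfl, rfl, rfl⟩

section CausalDiamonds

variable {X : Type*} [TopologicalSpace X] {I J : Set ℝ} {K : Set X} {d : ℝ → X → X → ℝ}
  {h : ℝ → X → ℝ} {α : ℝ → ℝ} {β : ℝ → X} {a b s C H r δ : ℝ}

theorem FutureCausal.dist_lt (hc : FutureCausal I d h α β a b) (hG : IsGenProduct I d h)
    (hJ : ComparableOn d J K C r) (hC : 0 ≤ C) (hJI : J ⊆ I) (hs : s ∈ J)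
    (hαJ : ∀ t ∈ Icc a b, α t ∈ J) (hH : 0 ≤ H)
    (hball : ∀ t ∈ Icc a b, ∀ y, d s (β a) y < δ → y ∈ K ∧ h (α t) y ≤ H)
    (hsmall : C * (H * (α b - α a)) < δ) : ∀ t ∈ Icc a b, d s (β a) (β t) < δ := by
  have hds := hG.metric.isPseudoDist (hJI hs)
  refine forall_lt_of_forall_Ioo_lt
    (((hc.acOn_snd s (hJI hs)).comp_dist hds (β a)).continuousOn_rdist hc.lt.le) ?_
  intro v hv hbefore
  refine lt_of_le_of_lt ?_ hsmall
  rcases hv.1.eq_or_lt with rfl | hav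
  · rw [hds.self]
    exact mul_nonneg hC (mul_nonneg hH (sub_nonneg.2 hc.le))
  have hsub : ∀ w ∈ Ioo a v, w ∈ Icc a b := fun w hw => ⟨hw.1.le, hw.2.le.trans hv.2⟩
  have hcv := hc.mono le_rfl hav hv.2
  calc d s (β a) (β v) ≤ C * ∫ t in a..v, genSpeed d β (α t) t :=
        hcv.dist_le_mul_integral_genSpeed hG hJ hJI hs (fun w hw => hαJ w (hsub w hw))
          fun w hw => (hball w (hsub w hw) _ (hbefore w hw)).1
    _ ≤ C * (H * (α v - α a)) := by
        gcongr
        exact hcv.integral_genSpeed_le hG fun w hw =>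
          (hball w (hsub w hw) _ (hbefore w hw)).2
    _ ≤ C * (H * (α b - α a)) := by
        gcongr
        exact (hc.mem_Icc hv).2

theorem IsGenProduct.eventually_warp_lt (hG : IsGenProduct I d h) {z : ℝ × X} (hz : z.1 ∈ I)
    (hH : h z.1 z.2 < H) : ∀ᶠ w in 𝓝 z, h w.1 w.2 < H :=
  (hG.continuousOn_warp.continuousAt (prod_mem_nhds (hG.isOpen.mem_nhds hz) univ_mem)).eventually
    (gt_mem_nhds hH)

variable [LocallyCompactSpace X]

theorem IsGenProduct.exists_comparableOn_nhds (hG : IsGenProduct I d h) {z : ℝ × X}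
    (hz : z.1 ∈ I) (hC : 1 < C) :
    ∃ J K r, J ⊆ I ∧ J ×ˢ K ∈ 𝓝 z ∧ ComparableOn d J K C r := by
  obtain ⟨K, hK, hKz⟩ := exists_compact_mem_nhds z.2
  obtain ⟨J, hJz, hJI, r, hJ⟩ := hG.condC.exists_comparableOn hG.metric hG.isOpen hK hz hC
  exact ⟨J, K, r, hJI, prod_mem_nhds hJz hKz, hJ⟩

theorem IsGenProduct.eventually_forall_causal_mem (hG : IsGenProduct I d h) {z : ℝ × X}
    (hz : z.1 ∈ I) {U : Set (ℝ × X)} (hU : U ∈ 𝓝 z) :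
    ∀ᶠ q in 𝓝 z ×ˢ 𝓝 z, ∀ a b α β, FutureCausal I d h α β a b →
      (α a, β a) = q.1 → (α b, β b) = q.2 → ∀ t ∈ Icc a b, (α t, β t) ∈ U := by
  obtain ⟨J, K, r, hJI, hJK, hJ⟩ := hG.exists_comparableOn_nhds hz one_lt_two
  have hH : 0 ≤ h z.1 z.2 + 1 := (add_pos (hG.warp_pos _ hz _) one_pos).le
  have hUJK := inter_mem hU (inter_mem hJK (hG.eventually_warp_lt hz (lt_add_one _)))
  have hbasis := hG.metric.hasBasis hz z.2
  obtain ⟨⟨ε, ρ⟩, ⟨hε, hρ⟩, hερ⟩ := (Metric.nhds_basis_ball.prod_nhds hbasis).mem_iff.1 hUJK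
  have hds := hG.metric.isPseudoDist hz
  have hsmall : Tendsto (fun q : (ℝ × X) × ℝ × X => 2 * ((h z.1 z.2 + 1) * (q.2.1 - q.1.1)))
      (𝓝 z ×ˢ 𝓝 z) (𝓝 0) := by
    rw [← nhds_prod_eq]
    exact Continuous.tendsto' (by fun_prop) _ _ (by ring)
  have hball : ∀ᶠ q in 𝓝 z, q.1 ∈ Metric.ball z.1 ε ∧ d z.1 z.2 q.2 < ρ / 2 :=
    prod_mem_nhds (Metric.ball_mem_nhds _ hε) (hbasis.mem_of_mem (half_pos hρ))
  filter_upwards [tendsto_fst.eventually hball, tendsto_snd.eventually hball,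
    hsmall.eventually (gt_mem_nhds (half_pos hρ))] with q hq₁ hq₂ hq a b α β hc h₁ h₂
  rw [← h₁] at hq₁ hq
  rw [← h₂] at hq₂ hq
  have hα : ∀ t ∈ Icc a b, α t ∈ Metric.ball z.1 ε := fun t ht =>
    (convex_ball z.1 ε).ordConnected.out hq₁.1 hq₂.1 (hc.mem_Icc ht)
  have hUα : ∀ t ∈ Icc a b, ∀ y, d z.1 (β a) y < ρ / 2 →
      (α t, y) ∈ U ∩ (J ×ˢ K ∩ {w | h w.1 w.2 < h z.1 z.2 + 1}) := fun t ht y hy =>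
    hερ ⟨hα t ht, (hds.triangle z.2 (β a) y).trans_lt (by linarith [hq₁.2])⟩
  have hdist := hc.dist_lt hG hJ zero_le_two hJI (mem_of_mem_nhds hJK).1
    (fun t ht => (hUα t ht (β a) (hds.self (β a) ▸ half_pos hρ)).2.1.1) hH
    (fun t ht y hy => ⟨(hUα t ht y hy).2.1.2, (hUα t ht y hy).2.2.le⟩) hq
  exact fun t ht => (hUα t ht _ (hdist t ht)).1

theorem IsGenProduct.eventually_timeSep_le_sqrt (hG : IsGenProduct I d h) {z : ℝ × X}
    (hz : z.1 ∈ I) (hH : h z.1 z.2 < H) (hC : 1 < C) :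
    ∀ᶠ q in 𝓝 z ×ˢ 𝓝 z, timeSep I d h q.1 q.2 ≤
      ENNReal.ofReal √((H * (q.2.1 - q.1.1)) ^ 2 - (d q.1.1 q.1.2 q.2.2 / C) ^ 2) := by
  obtain ⟨J, K, r, hJI, hJK, hJ⟩ := hG.exists_comparableOn_nhds hz hC
  have hU := inter_mem hJK (hG.eventually_warp_lt hz hH)
  filter_upwards [hG.eventually_forall_causal_mem hz hU] with q hq
  refine timeSep_le fun a b α β hc h₁ h₂ => ?_
  have hmem := hq a b α β hc h₁ h₂
  have hmem_Ioo := fun t (ht : t ∈ Ioo a b) => hmem t (Ioo_subset_Icc_self ht)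
  rw [← h₁, ← h₂]
  exact hc.lorLen_le_sqrt hG hJ (one_pos.trans hC) hJI (hmem a (left_mem_Icc.2 hc.lt.le)).1.1
    (fun t ht => (hmem_Ioo t ht).1.1) (fun t ht => (hmem_Ioo t ht).1.2)
    fun t ht => (hmem_Ioo t ht).2.le

namespace FutureCausal

theorem eventually_timeSep_le_mul (hc : FutureCausal I d h α β a b) (hG : IsGenProduct I d h)
    {t : ℝ} (ht : t ∈ Icc a b) (hH : h (α t) (β t) < H) :
    ∀ᶠ p in 𝓝[Icc a b] t ×ˢ 𝓝[Icc a b] t, p.1 ≤ p.2 →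
      timeSep I d h (α p.1, β p.1) (α p.2, β p.2) ≤ ENNReal.ofReal (H * (α p.2 - α p.1)) := by
  have hγ : Tendsto (fun u => (α u, β u)) (𝓝[Icc a b] t) (𝓝 (α t, β t)) :=
    (hc.continuousOn_fst.prodMk (hc.continuousOn_snd hG)) t ht
  have hH0 := (hG.warp_pos _ (hc.mem ht) (β t)).trans hH
  filter_upwards [(hγ.prodMap hγ).eventually
      (hG.eventually_timeSep_le_sqrt (hc.mem ht) hH one_lt_two),
    tendsto_fst.eventually self_mem_nhdsWithin, tendsto_snd.eventually self_mem_nhdsWithin]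
    with p hle hp₁ hp₂ hp
  refine hle.trans (ENNReal.ofReal_le_ofReal (Real.sqrt_le_iff.2 ⟨?_, sub_le_self _ (sq_nonneg _)⟩))
  exact mul_nonneg hH0.le (sub_nonneg.2 (hc.monotoneOn hp₁ hp₂ hp))

theorem ae_eventually_timeSep_le (hc : FutureCausal I d h α β a b) (hG : IsGenProduct I d h) :
    ∀ᵐ t : ℝ, t ∈ Ioo a b → ∀ l > lorSpeed d h α β t, ∀ᶠ p in straddle t,
      timeSep I d h (α p.1, β p.1) (α p.2, β p.2) ≤ ENNReal.ofReal (l * (p.2 - p.1)) := by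
  filter_upwards [hc.ae_tendsto_meanSpeed_fst hG, hc.ae_hasDerivAt] with t hspeed hderiv ht l hl
  have htI := Ioo_subset_Icc_self ht
  obtain ⟨κ, hκ0, hlt⟩ := exists_pos_sqrt_lt hl
  have hquot := ((((tendsto_slope_straddle (hderiv ht)).const_mul (h (α t) (β t) + κ)).pow 2).sub
    (((hspeed ht).div_const (1 + κ)).pow 2)).sqrt
  have hγ : Tendsto (fun u => (α u, β u)) (𝓝 t) (𝓝 (α t, β t)) :=
    (hc.continuousOn_fst.prodMk (hc.continuousOn_snd hG)).continuousAt (Icc_mem_nhds ht.1 ht.2)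
  filter_upwards [hquot.eventually (gt_mem_nhds hlt), eventually_straddle t,
    ((hγ.comp (tendsto_fst_straddle t)).prodMk (hγ.comp (tendsto_snd_straddle t))).eventually
      (hG.eventually_timeSep_le_sqrt (hc.mem htI) (lt_add_of_pos_right _ hκ0)
        (lt_add_of_pos_right _ hκ0))] with p hp hlen hsep
  have hw : 0 < p.2 - p.1 := sub_pos.2 hlen.2.2
  refine hsep.trans (ENNReal.ofReal_le_ofReal ((div_le_iff₀ hw).1 (le_of_eq_of_le ?_ hp.le)))
  rw [meanSpeed, ← Real.sqrt_sq hw.le, ← Real.sqrt_div' _ (sq_nonneg _), Real.sqrt_sq hw.le]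
  congr 1
  simp only [Function.comp_apply]
  field_simp

end FutureCausal

end CausalDiamonds

/-! ### The variational length -/

theorem rel_of_forall_eventually_nhdsWithin_Icc {R : ℝ → ℝ → Prop} {a b : ℝ} (hab : a ≤ b)
    (htrans : ∀ t ∈ Icc a b, ∀ u ∈ Icc a b, ∀ v ∈ Icc a b, t ≤ u → u ≤ v → R t u → R u v → R t v)
    (hR : ∀ t ∈ Icc a b, ∀ᶠ p in 𝓝[Icc a b] t ×ˢ 𝓝[Icc a b] t, p.1 ≤ p.2 → R p.1 p.2) :
    R a b := by
  have ha : a ∈ Icc a b := left_mem_Icc.2 hab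
  have hnhds : ∀ t ∈ Icc a b, ∃ U ∈ 𝓝[Icc a b] t, ∀ v ∈ U, ∀ w ∈ U, v ≤ w → R v w :=
    fun t ht => eventually_prod_self_iff.1 (hR t ht)
  set S := {v ∈ Icc a b | R a v}
  have haS : a ∈ S := by
    obtain ⟨U, hU, hRU⟩ := hnhds a ha
    exact ⟨ha, hRU a (mem_of_mem_nhdsWithin ha hU) a (mem_of_mem_nhdsWithin ha hU) le_rfl⟩
  obtain ⟨T, hT⟩ := Real.exists_isLUB ⟨a, haS⟩ ⟨b, fun v hv => hv.1.2⟩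
  have hTI : T ∈ Icc a b := ⟨hT.1 haS, hT.2 fun v hv => hv.1.2⟩
  obtain ⟨U, hU, hRU⟩ := hnhds T hTI
  have hU_near := mem_nhdsWithin_iff_eventually.1 hU
  obtain ⟨v, hvS, hvT, hvU⟩ : ∃ v ∈ S, v ≤ T ∧ v ∈ U := by
    obtain ⟨v, hvS, hvT, hvU⟩ := ((hT.frequently_mem ⟨a, haS⟩).and_eventually
      (eventually_mem_nhdsWithin.and (hU_near.filter_mono nhdsWithin_le_nhds))).exists
    exact ⟨v, hvS, hvT, hvU hvS.1⟩
  have hext : ∀ w ∈ Icc a b, w ∈ U → T ≤ w → R a w := fun w hw hwU hTw =>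
    htrans a ha v hvS.1 w hw hvS.1.1 (hvT.trans hTw) hvS.2 (hRU v hvU w hwU (hvT.trans hTw))
  rcases hTI.2.eq_or_lt with rfl | hTb
  · exact hext T hTI (mem_of_mem_nhdsWithin hTI hU) le_rfl
  · obtain ⟨w, hwU, hw⟩ := ((hU_near.filter_mono
      (nhdsWithin_le_nhds (s := Ioi T))).and (Ioc_mem_nhdsGT hTb)).exists
    have hwI : w ∈ Icc a b := ⟨hTI.1.trans hw.1.le, hw.2⟩
    exact absurd (hT.1 ⟨hwI, hext w hwI (hwU hwI) hw.1.le⟩) hw.1.not_ge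

theorem integral_le_sub_of_eventually_straddle {F f : ℝ → ℝ} {a b : ℝ} (hab : a ≤ b)
    (hF : MonotoneOn F (Icc a b)) (hf : IntervalIntegrable f volume a b)
    (h : ∀ᵐ t : ℝ, t ∈ Ioo a b → ∀ l < f t,
      ∀ᶠ p in straddle t, l * (p.2 - p.1) ≤ F p.2 - F p.1) :
    ∫ t in a..b, f t ≤ F b - F a := by
  have hFu : MonotoneOn F (uIcc a b) := by rwa [uIcc_of_le hab]
  have hFab : 0 ≤ F b - F a :=
    sub_nonneg.2 (hF (left_mem_Icc.2 hab) (right_mem_Icc.2 hab) hab)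
  have hderiv := hFu.intervalIntegral_deriv_mem_uIcc
  rw [uIcc_of_le hFab] at hderiv
  refine (integral_mono_of_ae_Ioo hab hf hFu.intervalIntegrable_deriv ?_).trans hderiv.2
  filter_upwards [hF.ae_differentiableWithinAt_of_mem, h] with t hdiff hle ht
  have hFt := (hdiff (Ioo_subset_Icc_self ht)).differentiableAt (Icc_mem_nhds ht.1 ht.2)
  refine le_of_forall_lt_imp_le_of_dense fun l hl =>
    ge_of_tendsto (tendsto_slope_straddle hFt.hasDerivAt) ?_
  filter_upwards [hle ht l hl, eventually_straddle t] with p hlp hp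
  exact (le_div_iff₀ (sub_pos.2 hp.2.2)).2 hlp

section VarLength

variable {X : Type*} {I : Set ℝ} {d : ℝ → X → X → ℝ} {h : ℝ → X → ℝ} {α : ℝ → ℝ} {β : ℝ → X}
  {a b c H : ℝ}

theorem varLength_le_timeSep (hab : a < b) :
    varLength I d h α β a b ≤ timeSep I d h (α a, β a) (α b, β b) := by
  refine sInf_le ⟨1, one_pos, fun i => if i = 0 then a else b, rfl, rfl, fun i hi => ?_, ?_⟩
  · obtain rfl := Nat.lt_one_iff.1 hi
    exact hab
  · rw [Finset.sum_range_one]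
    rfl

theorem varLength_self : varLength I d h α β a a = ⊤ := by
  refine sInf_eq_top.2 ?_
  rintro _ ⟨N, hN, t, ht0, htN, ht, rfl⟩
  have hlt := strictMonoOn_Iic_of_lt_succ (n := N) ht (mem_Iic.2 hN.le) self_mem_Iic hN
  exact absurd (ht0.trans htN.symm) hlt.ne

theorem varLength_le_add :
    varLength I d h α β a c ≤ varLength I d h α β a b + varLength I d h α β b c := by
  rw [varLength.eq_1 I d h α β a b, varLength.eq_1 I d h α β b c, ENNReal.sInf_add]
  refine le_iInf₂ ?_
  rintro _ ⟨M, hM, t, rfl, rfl, ht, rfl⟩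
  rw [ENNReal.add_sInf]
  refine le_iInf₂ ?_
  rintro _ ⟨N, -, u, hu0, rfl, hu, rfl⟩
  set w : ℕ → ℝ := fun i => if i ≤ M then t i else u (i - M)
  have hwt : ∀ i ≤ M, w i = t i := fun i hi => if_pos hi
  have hwu : ∀ i, w (M + i) = u i := by
    rintro (_ | i)
    · exact (hwt M le_rfl).trans hu0.symm
    · simp only [w]
      rw [if_neg (by omega), Nat.add_sub_cancel_left]
  refine sInf_le ⟨M + N, by omega, w, hwt 0 M.zero_le, hwu N, fun i hi => ?_, ?_⟩
  · rcases lt_or_ge i M with hiM | hiM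
    · rw [hwt i hiM.le, hwt (i + 1) hiM]
      exact ht i hiM
    · obtain ⟨j, rfl⟩ := Nat.exists_eq_add_of_le hiM
      rw [add_assoc, hwu, hwu]
      exact hu j (by omega)
  · rw [Finset.sum_range_add]
    congr 1
    · refine Finset.sum_congr rfl fun i hi => ?_
      have hiM := Finset.mem_range.1 hi
      rw [hwt i hiM.le, hwt (i + 1) hiM]
    · refine Finset.sum_congr rfl fun i _ => ?_
      rw [add_assoc, hwu, hwu]

namespace FutureCausal

variable [TopologicalSpace X]

theorem lorLen_le_varLength (hc : FutureCausal I d h α β a b) (hG : IsGenProduct I d h) :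
    ENNReal.ofReal (lorLen d h α β a b) ≤ varLength I d h α β a b := by
  refine le_sInf ?_
  rintro _ ⟨N, -, t, rfl, rfl, ht, rfl⟩
  have hmono : MonotoneOn t (Iic N) := (strictMonoOn_Iic_of_lt_succ ht).monotoneOn
  have hc_piece : ∀ i < N, FutureCausal I d h α β (t i) (t (i + 1)) := fun i hi =>
    hc.mono (hmono (mem_Iic.2 N.zero_le) (mem_Iic.2 hi.le) i.zero_le) (ht i hi)
      (hmono (mem_Iic.2 hi) self_mem_Iic hi)
  have hlen : lorLen d h α β (t 0) (t N) =
      ∑ i ∈ Finset.range N, lorLen d h α β (t i) (t (i + 1)) :=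
    (intervalIntegral.sum_integral_adjacent_intervals fun i hi =>
      (hc_piece i hi).intervalIntegrable_lorSpeed hG).symm
  have hnonneg : ∀ i ∈ Finset.range N, 0 ≤ lorLen d h α β (t i) (t (i + 1)) := fun i hi =>
    intervalIntegral.integral_nonneg (ht i (Finset.mem_range.1 hi)).le
      fun _ _ => Real.sqrt_nonneg _
  rw [hlen, ENNReal.ofReal_sum_of_nonneg hnonneg]
  exact Finset.sum_le_sum fun i hi => (hc_piece i (Finset.mem_range.1 hi)).le_timeSep

theorem exists_forall_warp_lt (hc : FutureCausal I d h α β a b) (hG : IsGenProduct I d h) :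
    ∃ H, ∀ t ∈ Icc a b, h (α t) (β t) < H := by
  obtain ⟨H, hH⟩ := isCompact_Icc.exists_bound_of_continuousOn (hc.continuousOn_warp hG)
  exact ⟨H + 1, fun t ht => ((le_abs_self _).trans (hH t ht)).trans_lt (lt_add_one H)⟩

theorem mul_sub_nonneg (hc : FutureCausal I d h α β a b) (hG : IsGenProduct I d h)
    (hH : ∀ t ∈ Icc a b, h (α t) (β t) < H) {t u : ℝ} (ht : t ∈ Icc a b) (hu : u ∈ Icc a b)
    (htu : t ≤ u) : 0 ≤ H * (α u - α t) :=
  mul_nonneg ((hG.warp_pos _ (hc.mem ht) _).trans (hH t ht)).le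
    (sub_nonneg.2 (hc.monotoneOn ht hu htu))

variable [LocallyCompactSpace X]

theorem varLength_le_mul (hc : FutureCausal I d h α β a b) (hG : IsGenProduct I d h)
    (hH : ∀ t ∈ Icc a b, h (α t) (β t) < H) :
    varLength I d h α β a b ≤ ENNReal.ofReal (H * (α b - α a)) := by
  refine rel_of_forall_eventually_nhdsWithin_Icc (R := fun t u => t < u →
    varLength I d h α β t u ≤ ENNReal.ofReal (H * (α u - α t))) hc.lt.le ?_ ?_ hc.lt
  · intro t ht u hu v hv htu huv hRtu hRuv _
    rcases htu.eq_or_lt with rfl | htu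
    · exact hRuv ‹_›
    rcases huv.eq_or_lt with rfl | huv
    · exact hRtu htu
    refine varLength_le_add.trans ((add_le_add (hRtu htu) (hRuv huv)).trans_eq ?_)
    rw [← ENNReal.ofReal_add (hc.mul_sub_nonneg hG hH ht hu htu.le)
      (hc.mul_sub_nonneg hG hH hu hv huv.le)]
    congr 1
    ring
  · intro t ht
    filter_upwards [hc.eventually_timeSep_le_mul hG ht (hH t ht)] with p hle hp hlt
    exact (varLength_le_timeSep hlt).trans (hle hp)

theorem varLength_ne_top (hc : FutureCausal I d h α β a b) (hG : IsGenProduct I d h) :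
    varLength I d h α β a b ≠ ⊤ := by
  obtain ⟨H, hH⟩ := hc.exists_forall_warp_lt hG
  exact ((hc.varLength_le_mul hG hH).trans_lt ENNReal.ofReal_lt_top).ne

/- At `t = a` this uses that `varLength I d h α β a a` is `⊤`, whose real value is `0`. -/
theorem toReal_varLength_sub_le (hc : FutureCausal I d h α β a b) (hG : IsGenProduct I d h)
    {t u : ℝ} (hat : a ≤ t) (htu : t < u) (hub : u ≤ b) :
    (varLength I d h α β a u).toReal - (varLength I d h α β a t).toReal ≤
      (varLength I d h α β t u).toReal := by
  rcases hat.eq_or_lt with rfl | hat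
  · rw [varLength_self, ENNReal.toReal_top, sub_zero]
  · have hfin_t := (hc.mono le_rfl hat (htu.le.trans hub)).varLength_ne_top hG
    have hfin_u := (hc.mono hat.le htu hub).varLength_ne_top hG
    rw [sub_le_iff_le_add', ← ENNReal.toReal_add hfin_t hfin_u]
    exact ENNReal.toReal_mono (ENNReal.add_ne_top.2 ⟨hfin_t, hfin_u⟩) varLength_le_add

theorem monotoneOn_mul_sub_varLength (hc : FutureCausal I d h α β a b) (hG : IsGenProduct I d h)
    (hH : ∀ t ∈ Icc a b, h (α t) (β t) < H) :
    MonotoneOn (fun t => H * α t - (varLength I d h α β a t).toReal) (Icc a b) := by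
  intro t ht u hu htu
  rcases htu.eq_or_lt with rfl | hlt
  · exact le_rfl
  have hle := ENNReal.toReal_le_of_le_ofReal
    (hc.mul_sub_nonneg hG hH ht hu htu)
    ((hc.mono ht.1 hlt hu.2).varLength_le_mul hG fun v hv => hH v (Icc_subset_Icc ht.1 hu.2 hv))
  dsimp only
  linarith [hc.toReal_varLength_sub_le hG ht.1 hlt hu.2]

theorem ae_eventually_varLength_sub_le (hc : FutureCausal I d h α β a b)
    (hG : IsGenProduct I d h) :
    ∀ᵐ t : ℝ, t ∈ Ioo a b → ∀ l > lorSpeed d h α β t, ∀ᶠ p in straddle t,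
      (varLength I d h α β a p.2).toReal - (varLength I d h α β a p.1).toReal ≤
        l * (p.2 - p.1) := by
  filter_upwards [hc.ae_eventually_timeSep_le hG] with t hsep ht l hl
  filter_upwards [hsep ht l hl, eventually_straddle_Icc ht] with p hle ⟨hap, hlt, hpb⟩
  have hl0 : 0 ≤ l := (Real.sqrt_nonneg _).trans hl.le
  exact (hc.toReal_varLength_sub_le hG hap hlt hpb).trans <|
    ENNReal.toReal_le_of_le_ofReal (mul_nonneg hl0 (sub_nonneg.2 hlt.le))
      ((varLength_le_timeSep hlt).trans hle)

theorem varLength_le_lorLen (hc : FutureCausal I d h α β a b) (hG : IsGenProduct I d h) :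
    varLength I d h α β a b ≤ ENNReal.ofReal (lorLen d h α β a b) := by
  obtain ⟨H, hH⟩ := hc.exists_forall_warp_lt hG
  have hint_α := hc.intervalIntegrable_deriv.const_mul H
  have hint := hc.intervalIntegrable_lorSpeed hG
  have hkey : ∫ t in a..b, (H * deriv α t - lorSpeed d h α β t) ≤
      H * α b - (varLength I d h α β a b).toReal -
        (H * α a - (varLength I d h α β a a).toReal) := by
    refine integral_le_sub_of_eventually_straddle hc.lt.le
      (hc.monotoneOn_mul_sub_varLength hG hH) (hint_α.sub hint) ?_
    filter_upwards [hc.ae_eventually_varLength_sub_le hG, hc.ae_hasDerivAt]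
      with t hvar hderiv ht l hl
    obtain ⟨m, hm, hml⟩ := exists_between (lt_sub_comm.1 hl)
    filter_upwards [hvar ht m hm, eventually_straddle t, ((tendsto_slope_straddle
      (hderiv ht)).const_mul H).eventually (lt_mem_nhds (lt_sub_iff_add_lt.1 (lt_sub_comm.1 hml)))]
      with p hvar_p hp hslope
    rw [← mul_div_assoc, lt_div_iff₀ (sub_pos.2 hp.2.2)] at hslope
    linarith
  rw [intervalIntegral.integral_sub hint_α hint, intervalIntegral.integral_const_mul,
    hc.integral_deriv, varLength_self, ENNReal.toReal_top] at hkey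
  rw [← ENNReal.ofReal_toReal (hc.varLength_ne_top hG)]
  refine ENNReal.ofReal_le_ofReal ?_
  change _ ≤ ∫ t in a..b, lorSpeed d h α β t
  linarith

end FutureCausal

end VarLength

theorem varLength_eq_lorLen_general {X : Type*} [TopologicalSpace X] [LocallyCompactSpace X]
    {I : Set ℝ} {d : ℝ → X → X → ℝ} {h : ℝ → X → ℝ} {a b : ℝ} {α : ℝ → ℝ} {β : ℝ → X}
    (hG : IsGenProduct I d h) (hc : FutureCausal I d h α β a b) :
    varLength I d h α β a b = ENNReal.ofReal (lorLen d h α β a b) :=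
  (hc.varLength_le_lorLen hG).antisymm (hc.lorLen_le_varLength hG)

/-- **The variational Lorentzian length agrees with the Lorentzian length**
(Proposition 4.8): `L_τ(γ) = τ(γ)` for every causal curve `γ`. -/
theorem varLength_eq_lorLen {X : Type*} [TopologicalSpace X] [LocallyCompactSpace X]
    (I : Set ℝ) (hIopen : IsOpen I) (hIord : I.OrdConnected) (hIne : I.Nonempty)
    (d : ℝ → X → X → ℝ) (hd : IsMetricFamily I d) (hdC : CondC I d)
    (h : ℝ → X → ℝ) (hpos : ∀ s ∈ I, ∀ x : X, 0 < h s x)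
    (hcont : ContinuousOn (fun z : ℝ × X => h z.1 z.2) (I ×ˢ (Set.univ : Set X)))
    (a b : ℝ) (α : ℝ → ℝ) (β : ℝ → X)
    (hcausal : FutureCausal I d h α β a b) :
    varLength I d h α β a b = ENNReal.ofReal (lorLen d h α β a b) :=
  varLength_eq_lorLen_general ⟨hIopen, hd, hdC, hpos, hcont⟩ hcausal

end
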